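/- arXiv:1304.6059 — 2 statements merged into one kernel-verified Lean document; each statement's English description precedes it below -/
import Mathlib

section
/- Let X, Y be objects of A, viewed as objects of K^b(A)/𝔻. Then any morphism e : X → Y in K^b(A)/𝔻 can be presented as h ∘ q⁻¹ for some object Z of K^b(A), h ∈ K^b(A)(Z, Y) and q ∈ K^b(A)(Z, X) with Cone(q) ∈ D. Moreover, for such a presentation, e = 0 if and only if h can be factored in K^b(A) through an object T that fits into a distinguished triangle C₋₁ → T → C₀ with C₋₁ ∈ D[−1] and C₀ ∈ D. -/
open CategoryTheory Limits Pretriangulated ZeroObject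

universe v u v' u'

section TriangulatedPrelude

variable {C : Type u} [Category.{v} C] [HasZeroObject C] [HasShift C ℤ] [Preadditive C]
  [∀ n : ℤ, (shiftFunctor C n).Additive] [Pretriangulated C]

/-- The objects of the smallest strict full triangulated subcategory of `C`
containing the set of objects `B`. -/
inductive genSub (B : Set C) : C → Prop
  | of (X : C) (hX : X ∈ B) : genSub B X
  | zero (X : C) (hX : IsZero X) : genSub B X
  | shift (X : C) (n : ℤ) (hX : genSub B X) : genSub B (X⟦n⟧)
  | ext₂ (T : Triangle C) (hT : T ∈ distTriang C) (h₁ : genSub B T.obj₁)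
      (h₃ : genSub B T.obj₃) : genSub B T.obj₂

/-- The triangulated subcategory of `C` generated by `B`. -/
def genSubcat (B : Set C) : ObjectProperty C :=
  genSub B

instance (B : Set C) : (genSubcat B).IsTriangulated where
  exists_zero := ⟨0, isZero_zero _, genSub.zero _ (isZero_zero _)⟩
  isStableUnderShiftBy n := ⟨fun X h => genSub.shift X n h⟩
  ext₂' T hT h₁ h₃ := ObjectProperty.le_isoClosure _ _ (genSub.ext₂ T hT h₁ h₃)

/-- The extension-closure of a class of objects `E`: the smallest class containing `E`
and `0` and such that for any distinguished triangle `X ⟶ Y ⟶ Z` with `X, Z` in the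
class, `Y` is also in the class. -/
inductive extClosure (E : Set C) : C → Prop
  | of (X : C) (hX : X ∈ E) : extClosure E X
  | zero (X : C) (hX : IsZero X) : extClosure E X
  | ext₂ (T : Triangle C) (hT : T ∈ distTriang C) (h₁ : extClosure E T.obj₁)
      (h₃ : extClosure E T.obj₃) : extClosure E T.obj₂

/-- `D_{[i,j]}`: the extension-closure of `∪_{i ≤ l ≤ j} D[l]`. -/
def shiftClosure (D : Set C) (i j : ℤ) : Set C :=
  extClosure {X | ∃ (Y : C) (l : ℤ), i ≤ l ∧ l ≤ j ∧ Y ∈ D ∧ X = Y⟦l⟧}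

/-- `D_{≥ i} = ∪_{k ≥ i} D_{[i,k]}`. -/
def shiftClosureGE (D : Set C) (i : ℤ) : Set C := {X | ∃ k, i ≤ k ∧ X ∈ shiftClosure D i k}

/-- `D_{≤ j} = ∪_{k ≤ j} D_{[k,j]}`. -/
def shiftClosureLE (D : Set C) (j : ℤ) : Set C := {X | ∃ k, k ≤ j ∧ X ∈ shiftClosure D k j}

/-- A set of objects `D` is weakly negative if `0 ∈ D` and `Hom(X, Y[i]) = 0`
for all `X, Y ∈ D` and all `i ≥ 2`. -/
def WeaklyNegative (D : Set C) : Prop :=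
  (0 : C) ∈ D ∧ ∀ X ∈ D, ∀ Y ∈ D, ∀ i : ℤ, 2 ≤ i → ∀ f : X ⟶ (Y⟦i⟧), f = 0

end TriangulatedPrelude

attribute [local instance] Limits.hasBinaryBiproducts_of_finite_biproducts

section KPrelude

variable {A : Type u} [Category.{v} A] [Preadditive A] [HasZeroObject A] [HasFiniteBiproducts A]

/-- The two-term cochain complex with `P` in degree `n` and `Q` in degree `n + 1`,
with differential given by `f : P ⟶ Q` (and all other terms `0`).
In particular, `twoComplex (-1) f` is the cone of a morphism `f` of `A`. -/
noncomputable def twoComplex (n : ℤ) {P Q : A} (f : P ⟶ Q) : CochainComplex A ℤ where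
  X i := if i = n then P else if i = n + 1 then Q else 0
  d i j :=
    if hij : i = n ∧ j = n + 1 then
      eqToHom (by simp [hij.1]) ≫ f ≫
        eqToHom (by simp [hij.2, show ¬ ((n : ℤ) + 1 = n) by omega])
    else 0
  shape i j hij := by
    rw [dif_neg]
    rintro ⟨rfl, rfl⟩
    exact hij rfl
  d_comp_d' i j k _ _ := by
    by_cases h1 : i = n ∧ j = n + 1
    · by_cases h2 : j = n ∧ k = n + 1
      · obtain ⟨h1a, h1b⟩ := h1; obtain ⟨h2a, h2b⟩ := h2; omega
      · rw [dif_neg h2, comp_zero]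
    · rw [dif_neg h1, zero_comp]

/-- The chain map from the two-term complex (in degrees `n`, `n + 1`) determined by
`f : P ⟶ Q` to the complex concentrated in degree `n` with value `M`, whose degree `n`
component is `g : P ⟶ M`. -/
noncomputable def twoComplexToSingle (n : ℤ) {P Q M : A} (f : P ⟶ Q) (g : P ⟶ M) :
    twoComplex n f ⟶ (HomologicalComplex.single A (ComplexShape.up ℤ) n).obj M where
  f i :=
    if h : i = n then
      eqToHom (by simp [twoComplex, h]) ≫ g ≫
        (HomologicalComplex.singleObjXSelf (ComplexShape.up ℤ) n M).inv ≫ eqToHom (by rw [h])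
    else 0
  comm' i j hij := by
    simp only [ComplexShape.up_Rel] at hij
    by_cases hj : j = n
    · have hi : ¬ (i = n ∧ j = n + 1) := by rintro ⟨rfl, rfl⟩; omega
      have hd : (twoComplex n f).d i j = 0 := by
        dsimp [twoComplex]; rw [dif_neg hi]; rfl
      rw [hd, zero_comp]
      have : i ≠ n := by omega
      rw [dif_neg this, zero_comp]
    · rw [dif_neg hj]
      rw [comp_zero]
      have : ((HomologicalComplex.single A (ComplexShape.up ℤ) n).obj M).d i j = 0 := by simp
      rw [this, comp_zero]

/-- The quotient functor `C^b(A) ⥤ K(A)` (restricted from all complexes). -/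
noncomputable abbrev homotopyQ : CochainComplex A ℤ ⥤ HomotopyCategory A (ComplexShape.up ℤ) :=
  HomotopyCategory.quotient A (ComplexShape.up ℤ)

/-- The canonical embedding of `A` into the homotopy category, as complexes concentrated
in degree `0`. -/
noncomputable abbrev iotaA : A ⥤ HomotopyCategory A (ComplexShape.up ℤ) :=
  HomologicalComplex.single A (ComplexShape.up ℤ) 0 ⋙ homotopyQ

/-- `B`: the set of cones of elements of `S`, viewed in the homotopy category. -/
def coneSet (S : MorphismProperty A) : Set (HomotopyCategory A (ComplexShape.up ℤ)) :=
  {X | ∃ (P Q : A) (s : P ⟶ Q), S s ∧ X = homotopyQ.obj (twoComplex (-1) s)}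

/-- The Verdier localization functor of the homotopy category by the triangulated
subcategory `𝔻` generated by the cones of elements of `S`. -/
noncomputable abbrev locQ (S : MorphismProperty A) :
    HomotopyCategory A (ComplexShape.up ℤ) ⥤ (genSubcat (coneSet S)).trW.Localization :=
  (genSubcat (coneSet S)).trW.Q

/-- The composite functor `A ⥤ K(A) ⥤ K(A)/𝔻`. -/
noncomputable abbrev uBig (S : MorphismProperty A) :
    A ⥤ (genSubcat (coneSet S)).trW.Localization :=
  iotaA ⋙ locQ S

/-- `A[S⁻¹]_add`: the full subcategory of the Verdier quotient whose
objects are those of `A` (viewed as complexes concentrated in degree `0`). -/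
def AddLoc (S : MorphismProperty A) : Type u := A

noncomputable instance (S : MorphismProperty A) : Category (AddLoc S) where
  Hom X Y := (uBig S).obj X ⟶ (uBig S).obj Y
  id X := 𝟙 ((uBig S).obj X)
  comp f g := f ≫ g

/-- The canonical functor `u : A ⥤ A[S⁻¹]_add` induced by the localization functor. -/
noncomputable def uFun (S : MorphismProperty A) : A ⥤ AddLoc S where
  obj X := X
  map f := (uBig S).map f
  map_id X := (uBig S).map_id X
  map_comp f g := (uBig S).map_comp f g

noncomputable instance (S : MorphismProperty A) : Preadditive (AddLoc S) where
  homGroup X Y := inferInstanceAs (AddCommGroup ((uBig S).obj X ⟶ (uBig S).obj Y))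
  add_comp P Q R f f' g :=
    @Preadditive.add_comp _ _ _ ((uBig S).obj P) ((uBig S).obj Q) ((uBig S).obj R) f f' g
  comp_add P Q R f g g' :=
    @Preadditive.comp_add _ _ _ ((uBig S).obj P) ((uBig S).obj Q) ((uBig S).obj R) f g g'

end KPrelude

/-- An object of the homotopy category is bounded if its underlying complex has only
finitely many nonzero terms. -/
def boundedK {A : Type u} [Category.{v} A] [Preadditive A] [HasZeroObject A]
    [HasFiniteBiproducts A]
    (X : HomotopyCategory A (ComplexShape.up ℤ)) : Prop :=
  ∃ a b : ℤ, ∀ i : ℤ, (i < a ∨ b < i) → IsZero ((X.as).X i)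

section AbstractPart

variable {C : Type u} [Category.{v} C] [HasZeroObject C] [HasShift C ℤ] [Preadditive C]
  [∀ n : ℤ, (shiftFunctor C n).Additive] [Pretriangulated C]

/-- extension closure of the shifts of `B` by elements of `I`. -/
def dI (B : Set C) (I : Set ℤ) : ObjectProperty C :=
  extClosure {X | ∃ Y ∈ B, ∃ l ∈ I, X = Y⟦l⟧}

lemma extClosure_of_iso {E : Set C} {X Y : C} (e : X ≅ Y) (h : extClosure E X) :
    extClosure E Y := by
  refine extClosure.ext₂ (Triangle.mk e.hom (0 : Y ⟶ 0) 0) ?_ h (extClosure.zero _ (isZero_zero _))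
  rw [Triangle.distinguished_iff_of_isZero₃ _ (isZero_zero _)]
  exact inferInstanceAs (IsIso e.hom)

lemma genSub_of_iso {E : Set C} {X Y : C} (e : X ≅ Y) (h : genSub E X) :
    genSub E Y := by
  refine genSub.ext₂ (Triangle.mk e.hom (0 : Y ⟶ 0) 0) ?_ h (genSub.zero _ (isZero_zero _))
  rw [Triangle.distinguished_iff_of_isZero₃ _ (isZero_zero _)]
  exact inferInstanceAs (IsIso e.hom)

instance (B : Set C) (I : Set ℤ) : (dI B I).IsClosedUnderIsomorphisms where
  of_iso e h := extClosure_of_iso e h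

instance (B : Set C) (I : Set ℤ) : (dI B I).IsTriangulatedClosed₂ :=
  .mk' (fun T hT h₁ h₃ => extClosure.ext₂ T hT h₁ h₃)

instance (B : Set C) (I : Set ℤ) : (dI B I).ContainsZero where
  exists_zero := ⟨0, isZero_zero _, extClosure.zero _ (isZero_zero _)⟩

lemma extClosure_le {E : Set C} {Q : ObjectProperty C} [Q.IsClosedUnderIsomorphisms]
    [Q.IsTriangulatedClosed₂] [Q.ContainsZero] (h : ∀ X ∈ E, Q X) {X : C} (hX : extClosure E X) :
    Q X := by
  induction hX with
  | of X hX => exact h X hX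
  | zero X hX => exact Q.prop_of_isZero hX
  | ext₂ T hT _ _ h₁ h₃ => exact Q.ext_of_isTriangulatedClosed₂ T hT h₁ h₃

lemma extClosure_left {E : Set C} {Y : C} (h : ∀ X ∈ E, ∀ f : X ⟶ Y, f = 0) {X : C}
    (hX : extClosure E X) (f : X ⟶ Y) : f = 0 := by
  induction hX with
  | of X hX => exact h X hX f
  | zero X hX => exact hX.eq_of_src _ _
  | ext₂ T hT _ _ h₁ h₃ =>
    obtain ⟨g, rfl⟩ := Triangle.yoneda_exact₂ T hT f (h₁ _)
    simp [h₃ g]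

lemma extClosure_right {E : Set C} {Y : C} (h : ∀ X ∈ E, ∀ f : Y ⟶ X, f = 0) {X : C}
    (hX : extClosure E X) (f : Y ⟶ X) : f = 0 := by
  induction hX with
  | of X hX => exact h X hX f
  | zero X hX => exact hX.eq_of_tgt _ _
  | ext₂ T hT _ _ h₁ h₃ =>
    obtain ⟨g, rfl⟩ := Triangle.coyoneda_exact₂ T hT f (h₃ _)
    simp [h₁ g]

lemma dI_shift {B : Set C} {I J : Set ℤ} (n : ℤ) (h : ∀ l ∈ I, l + n ∈ J) {M : C}
    (hM : dI B I M) : dI B J (M⟦n⟧) := by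
  unfold dI at hM
  induction hM with
  | of X hX =>
    obtain ⟨Y, hY, l, hl, rfl⟩ := hX
    exact (dI B J).prop_of_iso ((shiftFunctorAdd C l n).app Y)
      (extClosure.of _ ⟨Y, hY, l + n, h l hl, rfl⟩)
  | zero X hX => exact extClosure.zero _ (Functor.map_isZero _ hX)
  | ext₂ T hT _ _ h₁ h₃ =>
    exact (dI B J).ext_of_isTriangulatedClosed₂ _ (Triangle.shift_distinguished T hT n) h₁ h₃

lemma dI_univ_of_genSub {B : Set C} {M : C} (hM : genSub B M) : dI B Set.univ M := by
  induction hM with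
  | of X hX =>
    exact extClosure_of_iso ((shiftFunctorZero C ℤ).app X)
      (extClosure.of _ ⟨X, hX, 0, trivial, rfl⟩)
  | zero X hX => exact extClosure.zero _ hX
  | shift X n _ h => exact dI_shift n (by simp) h
  | ext₂ T hT _ _ h₁ h₃ => exact extClosure.ext₂ T hT h₁ h₃

lemma genSub_of_dI {B : Set C} {I : Set ℤ} {M : C} (hM : dI B I M) : genSub B M := by
  unfold dI at hM
  induction hM with
  | of X hX =>
    obtain ⟨Y, hY, l, hl, rfl⟩ := hX
    exact genSub.shift _ _ (genSub.of _ hY)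
  | zero X hX => exact genSub.zero _ hX
  | ext₂ T hT _ _ h₁ h₃ => exact genSub.ext₂ T hT h₁ h₃

lemma extClosure_of_dI_zero {B : Set C} {I : Set ℤ} (hI : ∀ l ∈ I, l = 0) {M : C}
    (hM : dI B I M) : extClosure B M := by
  unfold dI at hM
  induction hM with
  | of X hX =>
    obtain ⟨Y, hY, l, hl, rfl⟩ := hX
    obtain rfl := hI l hl
    exact extClosure_of_iso ((shiftFunctorZero C ℤ).app Y).symm (extClosure.of _ hY)
  | zero X hX => exact extClosure.zero _ hX
  | ext₂ T hT _ _ h₁ h₃ => exact extClosure.ext₂ T hT h₁ h₃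

lemma dI_zero_of_extClosure {B : Set C} {M : C}
    (hM : extClosure B M) : dI B {0} M := by
  induction hM with
  | of X hX =>
    exact extClosure_of_iso ((shiftFunctorZero C ℤ).app X)
      (extClosure.of _ ⟨X, hX, 0, rfl, rfl⟩)
  | zero X hX => exact extClosure.zero _ hX
  | ext₂ T hT _ _ h₁ h₃ => exact extClosure.ext₂ T hT h₁ h₃

lemma coyo {X₁ X₂ X₃ W : C} {f : X₁ ⟶ X₂} {g : X₂ ⟶ X₃} {h : X₃ ⟶ X₁⟦(1 : ℤ)⟧}
    (hT : Triangle.mk f g h ∈ distTriang C) (t : W ⟶ X₂) (ht : t ≫ g = 0) :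
    ∃ t' : W ⟶ X₁, t = t' ≫ f := Triangle.coyoneda_exact₂ _ hT t ht

lemma yo {X₁ X₂ X₃ W : C} {f : X₁ ⟶ X₂} {g : X₂ ⟶ X₃} {h : X₃ ⟶ X₁⟦(1 : ℤ)⟧}
    (hT : Triangle.mk f g h ∈ distTriang C) (t : X₂ ⟶ W) (ht : f ≫ t = 0) :
    ∃ t' : X₃ ⟶ W, t = g ≫ t' := Triangle.yoneda_exact₂ _ hT t ht

lemma yo' {X₁ X₂ X₃ W : C} {f : X₁ ⟶ X₂} {g : X₂ ⟶ X₃} {h : X₃ ⟶ X₁⟦(1 : ℤ)⟧}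
    (hT : Triangle.mk f g h ∈ distTriang C) (t : X₁ ⟶ W)
    (ht : ∀ z : X₃⟦(-1 : ℤ)⟧ ⟶ W, z = 0) :
    ∃ t' : X₂ ⟶ W, t = f ≫ t' :=
  Triangle.yoneda_exact₂ _ (inv_rot_of_distTriang _ hT) t (ht _)

lemma compl₁ {X₁ X₂ X₃ Y₁ Y₃ : C} {f : X₁ ⟶ X₂} {g : X₂ ⟶ X₃} {h : X₃ ⟶ X₁⟦(1 : ℤ)⟧}
    (hT : Triangle.mk f g h ∈ distTriang C)
    {f' : Y₁ ⟶ X₂} {g' : X₂ ⟶ Y₃} {h' : Y₃ ⟶ Y₁⟦(1 : ℤ)⟧}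
    (hT' : Triangle.mk f' g' h' ∈ distTriang C) (i : X₃ ⟶ Y₃) (hi : g' = g ≫ i) :
    ∃ a : X₁ ⟶ Y₁, f = a ≫ f' := by
  obtain ⟨a, ha⟩ := coyo hT' f (by
    have := comp_distTriang_mor_zero₁₂ _ hT
    change f ≫ g = 0 at this
    rw [hi, reassoc_of% this, zero_comp])
  exact ⟨a, ha⟩

/-- weak negativity, for all shifts -/
def WN (B : Set C) : Prop := ∀ P ∈ B, ∀ Q ∈ B, ∀ i j : ℤ, i + 2 ≤ j →
  ∀ f : P⟦i⟧ ⟶ Q⟦j⟧, f = 0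

lemma dI_hom_zero {B : Set C} (hB : WN B) {I J : Set ℤ} (hIJ : ∀ i ∈ I, ∀ j ∈ J, i + 2 ≤ j)
    {M N : C} (hM : dI B I M) (hN : dI B J N) (f : M ⟶ N) : f = 0 := by
  refine extClosure_left ?_ hM f
  rintro _ ⟨P, hP, i, hi, rfl⟩ f
  refine extClosure_right ?_ hN f
  rintro _ ⟨Q, hQ, j, hj, rfl⟩ f
  exact hB P hP Q hQ i j (hIJ i hi j hj) f

lemma swap {B : Set C} (hB : WN B) {I J : Set ℤ} (hIJ : ∀ i ∈ I, ∀ j ∈ J, i + 1 ≤ j) :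
    (dI B J).extensionProduct (dI B I) ≤ (dI B I).extensionProduct (dI B J) := by
  intro M ⟨P, Q, f, g, h, hT, hP, hQ⟩
  have hz : h = 0 := dI_hom_zero hB (I := I) (J := {j | j - 1 ∈ J})
    (fun i hi j hj => by have := hIJ i hi _ hj; lia) hQ
    (dI_shift 1 (fun l hl => by simpa using hl) hP) h
  obtain ⟨e, -, -⟩ := exists_iso_binaryBiproduct_of_distTriang _ hT hz
  change M ≅ P ⊞ Q at e
  exact ((dI B I).extensionProduct (dI B J)).prop_of_iso (e ≪≫ biprod.braiding _ _).symm
    ⟨_, _, _, _, _, binaryBiproductTriangle_distinguished Q P, hQ, hP⟩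

lemma self_ext (B : Set C) (I : Set ℤ) :
    (dI B I).extensionProduct (dI B I) ≤ dI B I := by
  intro M ⟨P, Q, f, g, h, hT, hP, hQ⟩
  exact extClosure.ext₂ _ hT hP hQ

lemma genSub_of_extClosure {B : Set C} {M : C} (h : extClosure B M) : genSub B M :=
  genSub_of_dI (dI_zero_of_extClosure h)

variable [IsTriangulated C]

lemma decomp {B : Set C} (hB : WN B) (I : Set ℤ) (j : ℤ) {M : C} (hM : dI B I M) :
    (dI B {i | i ∈ I ∧ i ≤ j}).extensionProduct (dI B {i | i ∈ I ∧ j < i}) M := by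
  unfold dI at hM
  induction hM with
  | of X hX =>
    obtain ⟨Y, hY, l, hl, rfl⟩ := hX
    by_cases h : l ≤ j
    · exact ObjectProperty.le_extensionProduct_left _ _ (extClosure.of _ ⟨Y, hY, l, ⟨hl, h⟩, rfl⟩)
    · exact ObjectProperty.le_extensionProduct_right _ _
        (extClosure.of _ ⟨Y, hY, l, ⟨hl, by lia⟩, rfl⟩)
  | zero X hX => exact ObjectProperty.le_extensionProduct_left _ _ (extClosure.zero _ hX)
  | ext₂ T hT _ _ h₁ h₃ =>
    generalize hP : dI B {i | i ∈ I ∧ i ≤ j} = P at *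
    generalize hQ : dI B {i | i ∈ I ∧ j < i} = Q at *
    have hs : Q.extensionProduct P ≤ P.extensionProduct Q := by
      rw [← hP, ← hQ]
      apply swap hB
      rintro i ⟨_, hi⟩ k ⟨_, hk⟩
      lia
    have hPP : P.extensionProduct P ≤ P := by rw [← hP]; apply self_ext
    have hQQ : Q.extensionProduct Q ≤ Q := by rw [← hQ]; apply self_ext
    have h : (P.extensionProduct Q).extensionProduct (P.extensionProduct Q) T.obj₂ :=
      ⟨_, _, _, _, _, hT, h₁, h₃⟩
    rw [ObjectProperty.extensionProduct_assoc, ← ObjectProperty.extensionProduct_assoc Q] at h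
    have h := ObjectProperty.monotone_extensionProduct_right _
      (ObjectProperty.monotone_extensionProduct_left _ hs) _ h
    rw [ObjectProperty.extensionProduct_assoc, ← ObjectProperty.extensionProduct_assoc P P] at h
    exact ObjectProperty.monotone_extensionProduct_left _ hPP _
      (ObjectProperty.monotone_extensionProduct_right _ hQQ _ h)

variable {E : Type u'} [Category.{v'} E] {B : Set C} (L : C ⥤ E)
  [L.IsLocalization (genSubcat B).trW]

lemma exists_roof (hB : WN B) {X Y : C}
    (hX : ∀ Q ∈ B, ∀ i : ℤ, 1 ≤ i → ∀ f : X ⟶ Q⟦i⟧, f = 0)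
    (hY : ∀ Q ∈ B, ∀ i : ℤ, i ≤ -2 → ∀ f : Q⟦i⟧ ⟶ Y, f = 0)
    (e : L.obj X ⟶ L.obj Y) :
    ∃ (Z : C) (h : Z ⟶ Y) (q : Z ⟶ X) (W' : C) (a : X ⟶ W') (b : W' ⟶ Z⟦(1 : ℤ)⟧),
      Triangle.mk q a b ∈ distTriang C ∧ extClosure B W' ∧ L.map q ≫ e = L.map h := by
  obtain ⟨φ, hφ⟩ := Localization.exists_rightFraction L (genSubcat B).trW e
  obtain ⟨M, g, w, hT, hM⟩ := φ.hs
  have he : L.map φ.s ≫ e = L.map φ.f := by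
    rw [hφ, MorphismProperty.RightFraction.map_s_comp_map]
  obtain ⟨Q, P, i, p, r, hT₂, hQ, hP⟩ := decomp hB _ 0 (dI_univ_of_genSub hM)
  have hgp : g ≫ p = 0 := extClosure_right (by
    rintro _ ⟨Y, hY, l, ⟨_, hl⟩, rfl⟩ f
    exact hX Y hY l (by lia) f) hP _
  obtain ⟨g', hg'⟩ := coyo hT₂ g hgp
  obtain ⟨Z₂, q₂, w₂, hT₃⟩ := distinguished_cocone_triangle₁ g'
  obtain ⟨a, ha⟩ := compl₁ hT₃ hT i hg'
  have he₂ : L.map q₂ ≫ e = L.map (a ≫ φ.f) := by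
    rw [L.map_comp, ← he, ← L.map_comp_assoc, ← ha]
  obtain ⟨Q₂, P₂, i₂, p₂, r₂, hT₄, hQ₂, hP₂⟩ := decomp hB _ (-1) hQ
  obtain ⟨Z₃, q₃, w₃, hT₅⟩ := distinguished_cocone_triangle₁ (g' ≫ p₂)
  let o := Triangulated.someOctahedron' rfl hT₃ hT₄ hT₅
  obtain ⟨h, hh⟩ := yo' o.mem (a ≫ φ.f)
    (extClosure_left (by
      rintro _ ⟨Y, hY', l, hl, rfl⟩ f
      exact hY Y hY' l hl f) (dI_shift (J := {l | l ≤ -2}) (-1) (by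
        rintro l ⟨_, hl⟩
        change l + -1 ≤ -2
        change l ≤ -1 at hl
        lia) hQ₂))
  refine ⟨Z₃, h, q₃, P₂, _, _, hT₅, extClosure_of_dI_zero ?_ hP₂, ?_⟩
  · rintro l ⟨⟨_, hl⟩, hl'⟩
    lia
  · have : IsIso (L.map o.m₁) :=
      Localization.inverts L (genSubcat B).trW _ ⟨_, _, _, o.mem, genSub_of_dI hQ₂⟩
    rw [← cancel_epi (L.map o.m₁), ← L.map_comp, ← hh, ← he₂, ← L.map_comp_assoc, o.comm₁]

lemma exists_factor (hB : WN B) {X Y Z W : C}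
    (hX : ∀ Q ∈ B, ∀ i : ℤ, 1 ≤ i → ∀ f : X ⟶ Q⟦i⟧, f = 0)
    (hY : ∀ Q ∈ B, ∀ i : ℤ, i ≤ -2 → ∀ f : Q⟦i⟧ ⟶ Y, f = 0)
    (h : Z ⟶ Y) (q : Z ⟶ X) (a : X ⟶ W) (b : W ⟶ Z⟦(1 : ℤ)⟧)
    (hT : Triangle.mk q a b ∈ distTriang C) (hW : extClosure B W)
    (hz : ∃ (Z' : C) (s : Z' ⟶ Z), (genSubcat B).trW s ∧ s ≫ h = 0) :
    ∃ (T : C) (a' : Z ⟶ T) (b' : T ⟶ Y), a' ≫ b' = h ∧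
      ∃ (Cm C0 : C) (x : Cm ⟶ T) (y : T ⟶ C0)
        (z : C0 ⟶ Cm⟦(1 : ℤ)⟧), (Triangle.mk x y z ∈ distTriang C) ∧
          extClosure B (Cm⟦(1 : ℤ)⟧) ∧ extClosure B C0 := by
  obtain ⟨Z', s, ⟨N, g, w, hN, hN'⟩, hs⟩ := hz
  obtain ⟨k, hk⟩ := yo hN h hs
  obtain ⟨Q, P, i, p, r, hT₂, hQ, hP⟩ := decomp hB _ 0 (dI_univ_of_genSub hN')
  have hgp : g ≫ p = 0 := by
    obtain ⟨t, ht⟩ := yo' hT (g ≫ p)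
      (dI_hom_zero hB (I := {-1}) (by
        rintro _ rfl j ⟨_, hj⟩
        lia) (dI_shift (-1) (by simp) (dI_zero_of_extClosure hW)) hP)
    rw [ht, extClosure_right (by
      rintro _ ⟨Y, hY, l, ⟨_, hl⟩, rfl⟩ f
      exact hX Y hY l (by lia) f) hP t]
    simp
  obtain ⟨g', hg'⟩ := coyo hT₂ g hgp
  obtain ⟨Q₂, P₂, i₂, p₂, r₂, hT₄, hQ₂, hP₂⟩ := decomp hB _ (-2) hQ
  obtain ⟨k', hk'⟩ := yo hT₄ (i ≫ k) (extClosure_left (by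
      rintro _ ⟨Y, hY', l, hl, rfl⟩ f
      exact hY Y hY' l hl.2 f) hQ₂ _)
  obtain ⟨Q₃, P₃, i₃, p₃, r₃, hT₅, hQ₃, hP₃⟩ := decomp hB _ (-1) hP₂
  refine ⟨P₂, g' ≫ p₂, k', ?_, Q₃, P₃, _, _, _, hT₅, ?_, ?_⟩
  · rw [Category.assoc, ← hk', ← Category.assoc, ← hg', hk]
  · refine extClosure_of_dI_zero (I := {0}) (by simp) (dI_shift 1 ?_ hQ₃)
    rintro l ⟨⟨_, hl⟩, hl'⟩
    simp only [Set.mem_singleton_iff]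
    lia
  · refine extClosure_of_dI_zero ?_ hP₃
    rintro l ⟨⟨⟨_, hl⟩, _⟩, hl'⟩
    lia

lemma map_zero_of_factor {Y Z T : C} (a' : Z ⟶ T) (b' : T ⟶ Y) {Cm C0 : C} (x : Cm ⟶ T)
    (y : T ⟶ C0) (z : C0 ⟶ Cm⟦(1 : ℤ)⟧) (hT : Triangle.mk x y z ∈ distTriang C)
    (h₁ : extClosure B (Cm⟦(1 : ℤ)⟧)) (h₂ : extClosure B C0) :
    L.map (a' ≫ b') = L.map 0 := by
  have hm : genSub B Cm := genSub_of_iso ((shiftShiftNeg Cm (1 : ℤ)))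
    (genSub.shift _ (-1) (genSub_of_extClosure h₁))
  have ht : genSub B T := genSub.ext₂ _ hT hm (genSub_of_extClosure h₂)
  rw [MorphismProperty.map_eq_iff_precomp L (genSubcat B).trW]
  obtain ⟨Z', s, w, hs⟩ := distinguished_cocone_triangle₁ a'
  refine ⟨Z', s, ⟨_, _, _, hs, ht⟩, ?_⟩
  have := comp_distTriang_mor_zero₁₂ _ hs
  change s ≫ a' = 0 at this
  rw [reassoc_of% this]
  simp

end AbstractPart

section ConcretePart

variable {A : Type u} [Category.{v} A] [Preadditive A] [HasZeroObject A] [HasFiniteBiproducts A]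

lemma homz {K L : CochainComplex A ℤ} (h : ∀ i, IsZero (K.X i) ∨ IsZero (L.X i))
    {K' L' : HomotopyCategory A (ComplexShape.up ℤ)} (hK : K' = homotopyQ.obj K)
    (hL : L' = homotopyQ.obj L) (f : K' ⟶ L') : f = 0 := by
  subst hK hL
  obtain ⟨g, rfl⟩ := (homotopyQ (A := A)).map_surjective f
  have : g = 0 := by
    ext i
    rcases h i with h | h
    · exact h.eq_of_src _ _
    · exact h.eq_of_tgt _ _
  rw [this, Functor.map_zero]

lemma isZero_twoComplex (n : ℤ) {P Q : A} (f : P ⟶ Q) (i : ℤ) (h₁ : i ≠ n) (h₂ : i ≠ n + 1) :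
    IsZero ((twoComplex n f).X i) := by
  dsimp [twoComplex]
  rw [if_neg h₁, if_neg h₂]
  exact isZero_zero _

lemma isZero_single (X : A) (i : ℤ) (h : i ≠ 0) :
    IsZero (((HomologicalComplex.single A (ComplexShape.up ℤ) 0).obj X).X i) :=
  HomologicalComplex.isZero_single_obj_X _ _ _ _ h

lemma isZero_shift (K : CochainComplex A ℤ) (n i : ℤ) (h : IsZero (K.X (i + n))) :
    IsZero ((K⟦n⟧).X i) := h

lemma wn_coneSet (S : MorphismProperty A) : WN (coneSet S) := by
  rintro _ ⟨P, Q, s, -, rfl⟩ _ ⟨P', Q', s', -, rfl⟩ i j hij f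
  refine homz (K := (twoComplex (-1) s)⟦i⟧) (L := (twoComplex (-1) s')⟦j⟧) (fun k => ?_)
    (by first | rfl | exact HomotopyCategory.shift_quotient_obj _ _)
    (by first | rfl | exact HomotopyCategory.shift_quotient_obj _ _) f
  by_cases h : k + i = -1 ∨ k + i = 0
  · exact Or.inr (isZero_shift _ _ _ (isZero_twoComplex _ _ _ (by lia) (by lia)))
  · exact Or.inl (isZero_shift _ _ _ (isZero_twoComplex _ _ _ (by lia) (by lia)))

lemma hom_single_left (S : MorphismProperty A) (X : A) :
    ∀ Q ∈ coneSet S, ∀ i : ℤ, 1 ≤ i → ∀ f : iotaA.obj X ⟶ Q⟦i⟧, f = 0 := by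
  rintro _ ⟨P, Q, s, -, rfl⟩ i hi f
  refine homz (K := (HomologicalComplex.single A (ComplexShape.up ℤ) 0).obj X)
    (L := (twoComplex (-1) s)⟦i⟧) (fun k => ?_)
    (by first | rfl | exact HomotopyCategory.shift_quotient_obj _ _)
    (by first | rfl | exact HomotopyCategory.shift_quotient_obj _ _) f
  by_cases h : k = 0
  · exact Or.inr (isZero_shift _ _ _ (isZero_twoComplex _ _ _ (by lia) (by lia)))
  · exact Or.inl (isZero_single _ _ h)

lemma hom_single_right (S : MorphismProperty A) (Y : A) :
    ∀ Q ∈ coneSet S, ∀ i : ℤ, i ≤ -2 → ∀ f : Q⟦i⟧ ⟶ iotaA.obj Y, f = 0 := by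
  rintro _ ⟨P, Q, s, -, rfl⟩ i hi f
  refine homz (K := (twoComplex (-1) s)⟦i⟧)
    (L := (HomologicalComplex.single A (ComplexShape.up ℤ) 0).obj Y) (fun k => ?_)
    (by first | rfl | exact HomotopyCategory.shift_quotient_obj _ _)
    (by first | rfl | exact HomotopyCategory.shift_quotient_obj _ _) f
  by_cases h : k = 0
  · exact Or.inl (isZero_shift _ _ _ (isZero_twoComplex _ _ _ (by lia) (by lia)))
  · exact Or.inr (isZero_single _ _ h)

/-- bounded objects, as an object property -/
def bd (A : Type u) [Category.{v} A] [Preadditive A] [HasZeroObject A] [HasFiniteBiproducts A] :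
    ObjectProperty (HomotopyCategory A (ComplexShape.up ℤ)) := boundedK

instance : (bd A).ContainsZero where
  exists_zero := ⟨homotopyQ.obj 0, Functor.map_isZero _ (isZero_zero _), 0, 0, fun i _ =>
    Functor.map_isZero (HomologicalComplex.eval A (ComplexShape.up ℤ) i) (isZero_zero _)⟩

instance : (bd A).IsStableUnderShift ℤ where
  isStableUnderShiftBy n :=
    { le_shift K hK := by
        obtain ⟨a, b, h⟩ := hK
        obtain ⟨K : CochainComplex _ _, rfl⟩ := K.quotient_obj_surjective
        rw [ObjectProperty.prop_shift_iff, HomotopyCategory.shift_quotient_obj]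
        exact ⟨a - n, b - n, fun i hi => isZero_shift K n i (h _ (by lia))⟩ }

instance : (bd A).IsTriangulatedClosed₃ where
  ext₃' T hT h₁ h₂ := by
    obtain ⟨a, b, h₁⟩ := h₁
    obtain ⟨c, d, h₂⟩ := h₂
    obtain ⟨f, hf⟩ := (homotopyQ (A := A)).map_surjective
      (X := T.obj₁.as) (Y := T.obj₂.as) T.mor₁
    refine ⟨_, ?_,
      ⟨Triangle.π₃.mapIso (isoTriangleOfIso₁₂ T _ hT
        (HomotopyCategory.mappingCone_triangleh_distinguished f)
        (Iso.refl _) (Iso.refl _) ?_)⟩⟩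
    · refine ⟨min (a - 1) c, max b d, fun i hi => ?_⟩
      change IsZero ((CochainComplex.mappingCone f).X i)
      rw [CochainComplex.mappingCone.isZero_X_iff]
      exact ⟨h₁ _ (by lia), h₂ _ (by lia)⟩
    · change T.mor₁ ≫ 𝟙 _ = 𝟙 _ ≫ homotopyQ.map f
      rw [hf]
      exact (Category.comp_id _).trans (Category.id_comp _).symm

instance : (bd A).IsTriangulated where
  toIsTriangulatedClosed₂ := .of_isTriangulatedClosed₃

lemma bd_iota (X : A) : (bd A).isoClosure (iotaA.obj X) :=
  ObjectProperty.le_isoClosure _ _ ⟨0, 0, fun i hi => isZero_single X i (by lia)⟩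

lemma bd_extClosure (S : MorphismProperty A) {W : HomotopyCategory A (ComplexShape.up ℤ)}
    (h : extClosure (coneSet S) W) : (bd A).isoClosure W := by
  refine extClosure_le ?_ h
  rintro _ ⟨P, Q, s, -, rfl⟩
  exact ObjectProperty.le_isoClosure _ _
    ⟨-1, 0, fun i hi => isZero_twoComplex _ _ _ (by lia) (by lia)⟩

end ConcretePart

/-- Proposition: roofs presenting morphisms between objects of `A` in `K^b(A)/𝔻`, with
cone in the extension-closure `D` of the set of cones of elements of `S`, and the
criterion for the vanishing of such a morphism. -/
theorem statement8 {A : Type u} [Category.{v} A] [Preadditive A] [HasZeroObject A]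
    [HasFiniteBiproducts A] (S : MorphismProperty A) (X Y : A) :
    (∀ e : (uBig S).obj X ⟶ (uBig S).obj Y,
      ∃ Z : HomotopyCategory A (ComplexShape.up ℤ), boundedK Z ∧
        ∃ (h : Z ⟶ iotaA.obj Y) (q : Z ⟶ iotaA.obj X),
          (∃ (W' : HomotopyCategory A (ComplexShape.up ℤ)) (a : iotaA.obj X ⟶ W')
            (b : W' ⟶ Z⟦(1 : ℤ)⟧),
            (Triangle.mk q a b ∈ distTriang (HomotopyCategory A (ComplexShape.up ℤ))) ∧
            extClosure (coneSet S) W') ∧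
          IsIso ((locQ S).map q) ∧ (locQ S).map q ≫ e = (locQ S).map h) ∧
    (∀ (e : (uBig S).obj X ⟶ (uBig S).obj Y) (Z : HomotopyCategory A (ComplexShape.up ℤ))
      (h : Z ⟶ iotaA.obj Y) (q : Z ⟶ iotaA.obj X),
      (∃ (W' : HomotopyCategory A (ComplexShape.up ℤ)) (a : iotaA.obj X ⟶ W')
        (b : W' ⟶ Z⟦(1 : ℤ)⟧),
        (Triangle.mk q a b ∈ distTriang (HomotopyCategory A (ComplexShape.up ℤ))) ∧
        extClosure (coneSet S) W') →
      IsIso ((locQ S).map q) → (locQ S).map q ≫ e = (locQ S).map h →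
      (e = 0 ↔
        ∃ (T : HomotopyCategory A (ComplexShape.up ℤ)) (a' : Z ⟶ T)
          (b' : T ⟶ iotaA.obj Y), a' ≫ b' = h ∧
          ∃ (Cm C0 : HomotopyCategory A (ComplexShape.up ℤ)) (x : Cm ⟶ T) (y : T ⟶ C0)
            (z : C0 ⟶ Cm⟦(1 : ℤ)⟧),
            (Triangle.mk x y z ∈ distTriang (HomotopyCategory A (ComplexShape.up ℤ))) ∧
            extClosure (coneSet S) (Cm⟦(1 : ℤ)⟧) ∧ extClosure (coneSet S) C0)) := by
  have : (locQ S).IsLocalization (genSubcat (coneSet S)).trW := inferInstance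
  refine ⟨fun e => ?_, fun e Z h q => ?_⟩
  · obtain ⟨Z₀, h, q, W', a, b, hT, hW, he⟩ := exists_roof (B := coneSet S) (locQ S)
      (wn_coneSet S) (hom_single_left S X) (hom_single_right S Y) e
    obtain ⟨Z, hZ, ⟨i⟩⟩ : (bd A).isoClosure Z₀ :=
      (bd A).isoClosure.ext_of_isTriangulatedClosed₁ _ hT (bd_iota X) (bd_extClosure S hW)
    have hT' : Triangle.mk (i.inv ≫ q) a (b ≫ i.hom⟦(1 : ℤ)⟧') ∈
        distTriang (HomotopyCategory A (ComplexShape.up ℤ)) := by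
      refine isomorphic_distinguished _ hT _ (Triangle.isoMk _ _ i.symm (Iso.refl _) (Iso.refl _)
        ?_ ?_ ?_)
      · exact Category.comp_id _
      · exact (Category.comp_id _).trans (Category.id_comp _).symm
      · change (b ≫ i.hom⟦(1 : ℤ)⟧') ≫ i.inv⟦(1 : ℤ)⟧' = 𝟙 _ ≫ b
        rw [Category.assoc, ← Functor.map_comp, i.hom_inv_id, CategoryTheory.Functor.map_id, Category.comp_id,
          Category.id_comp]
    refine ⟨Z, hZ, i.inv ≫ h, i.inv ≫ q, ⟨W', a, _, hT', hW⟩, ?_, ?_⟩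
    · exact Localization.inverts (locQ S) (genSubcat (coneSet S)).trW _
        ⟨_, _, _, hT', genSub_of_extClosure hW⟩
    · rw [Functor.map_comp, Functor.map_comp, Category.assoc, he]
  · rintro ⟨W', a, b, hT, hW⟩ hq he
    have key : e = 0 ↔ (locQ S).map h = (locQ S).map 0 := by
      rw [Functor.map_zero, ← he]
      constructor
      · rintro rfl
        exact comp_zero
      · intro h0
        rw [← cancel_epi ((locQ S).map q), h0, comp_zero]
    rw [key]
    constructor
    · intro h0
      rw [MorphismProperty.map_eq_iff_precomp (locQ S) (genSubcat (coneSet S)).trW] at h0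
      obtain ⟨Z', s, hs, h0⟩ := h0
      exact exists_factor (wn_coneSet S) (hom_single_left S X) (hom_single_right S Y) h q a b hT hW
        ⟨Z', s, hs, by rw [h0, comp_zero]⟩
    · rintro ⟨T, a', b', rfl, Cm, C0, x, y, z, hT', h₁, h₂⟩
      exact map_zero_of_factor (locQ S) a' b' x y z hT' h₁ h₂
end

section
/- Let C be a triangulated category with a weight structure w, let S be a set of morphisms of the heart Hw, let B be the set of cones of elements of S, and let 𝔻 be the triangulated subcategory of C generated by B. Let H denote the full subcategory of the Verdier quotient C/𝔻 whose objects are those of C_{w=0}, and let u : Hw → H be the functor induced by the localization functor. Then u is the universal additive functor inverting S: for any additive category A' and any additive functor F : Hw → A', F factors through u if and only if F(s) is an isomorphism for every s ∈ S, and in that case the factorization through u is unique. -/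
open CategoryTheory Limits Pretriangulated ZeroObject

universe v u v' u'

section TriangulatedPrelude

variable {C : Type u} [Category.{v} C] [HasZeroObject C] [HasShift C ℤ] [Preadditive C]
  [∀ n : ℤ, (shiftFunctor C n).Additive] [Pretriangulated C]

instance genSubcat_isTriangulated (B : Set C) : (genSubcat B).IsTriangulated where
  exists_zero := ⟨0, isZero_zero _, genSub.zero _ (isZero_zero _)⟩
  isStableUnderShiftBy n := ⟨fun X h => genSub.shift X n h⟩
  ext₂' T hT h₁ h₃ :=
    ObjectProperty.le_isoClosure (genSubcat B) _ (genSub.ext₂ T hT h₁ h₃)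

end TriangulatedPrelude

section WeightStructurePrelude

variable (C : Type u) [Category.{v} C] [HasZeroObject C] [HasShift C ℤ] [Preadditive C]
  [∀ n : ℤ, (shiftFunctor C n).Additive] [Pretriangulated C]

/-- A weight structure on a (pre)triangulated category `C` (homological convention):
two retract-closed classes of objects `LE = C_{w≤0}` and `GE = C_{w≥0}` such that
`C_{w≤0} ⊆ C_{w≤0}[1]`, `C_{w≥0}[1] ⊆ C_{w≥0}`, `Hom(C_{w≤0}, C_{w≥0}[1]) = 0`, and every
object `M` admits a weight decomposition `X ⟶ M ⟶ Y ⟶ X[1]` with `X ∈ C_{w≤0}`,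
`Y ∈ C_{w≥0}[1]`. -/
structure WeightStructure where
  /-- the class `C_{w≤0}` -/
  LE : Set C
  /-- the class `C_{w≥0}` -/
  GE : Set C
  retract_LE : ∀ ⦃X Y : C⦄, Y ∈ LE → ∀ (i : X ⟶ Y) (r : Y ⟶ X), i ≫ r = 𝟙 X → X ∈ LE
  retract_GE : ∀ ⦃X Y : C⦄, Y ∈ GE → ∀ (i : X ⟶ Y) (r : Y ⟶ X), i ≫ r = 𝟙 X → X ∈ GE
  shift_LE : ∀ X ∈ LE, X⟦(-1 : ℤ)⟧ ∈ LE
  shift_GE : ∀ X ∈ GE, X⟦(1 : ℤ)⟧ ∈ GE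
  orthogonality : ∀ X ∈ LE, ∀ Y ∈ GE, ∀ f : X ⟶ (Y⟦(1 : ℤ)⟧), f = 0
  decomposition : ∀ M : C, ∃ (X Y : C) (a : X ⟶ M) (b : M ⟶ Y) (c : Y ⟶ X⟦(1 : ℤ)⟧),
    (Triangle.mk a b c ∈ distTriang C) ∧ X ∈ LE ∧ Y⟦(-1 : ℤ)⟧ ∈ GE

variable {C}

/-- The class `C_{w=0} = C_{w≤0} ∩ C_{w≥0}` of objects of the heart. -/
def WeightStructure.heart (w : WeightStructure C) : Set C := w.LE ∩ w.GE

/-- The class `C_{[0,1]} = C_{w≥0} ∩ C_{w≤1}`. -/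
def WeightStructure.zeroOne (w : WeightStructure C) : Set C :=
  {X | X ∈ w.GE ∧ X⟦(-1 : ℤ)⟧ ∈ w.LE}

end WeightStructurePrelude

section Statement19

variable {C : Type u} [Category.{v} C] [HasZeroObject C] [HasShift C ℤ]
  [Preadditive C] [∀ n : ℤ, (shiftFunctor C n).Additive] [Pretriangulated C]
  [IsTriangulated C]

/-- The set of cones of the elements of a class of morphisms `S`. -/
def conesOf (S : MorphismProperty C) : Set C :=
  {Z | ∃ (X Y : C) (f : X ⟶ Y) (a : Y ⟶ Z) (b : Z ⟶ X⟦(1 : ℤ)⟧),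
    S f ∧ (Triangle.mk f a b ∈ distTriang C)}

/-- The heart `Hw` of a weight structure, as a full subcategory of `C`. -/
abbrev HeartCat (w : WeightStructure C) : Type u := ObjectProperty.FullSubcategory (· ∈ w.heart)

/-- `H`: the full subcategory of the Verdier quotient `C/𝔻` whose objects are those of
`C_{w=0}`. -/
abbrev HeartLoc (w : WeightStructure C) (S : MorphismProperty C) :=
  InducedCategory (genSubcat (conesOf S)).trW.Localization
    (fun X : HeartCat w => (genSubcat (conesOf S)).trW.Q.obj X.obj)

/-- The functor `u : Hw ⥤ H` induced by the localization functor. -/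
noncomputable def uHeart (w : WeightStructure C) (S : MorphismProperty C) :
    HeartCat w ⥤ HeartLoc w S where
  obj X := X
  map {X Y} f := InducedCategory.homMk ((genSubcat (conesOf S)).trW.Q.map f.hom)
  map_id X := InducedCategory.hom_ext ((genSubcat (conesOf S)).trW.Q.map_id X.obj)
  map_comp f g := InducedCategory.hom_ext ((genSubcat (conesOf S)).trW.Q.map_comp f.hom g.hom)

set_option linter.unusedSectionVars false

namespace WLoc

lemma dist_of_iso {X Y Z X' Y' Z' : C} {f : X ⟶ Y} {g : Y ⟶ Z} {h : Z ⟶ X⟦(1 : ℤ)⟧}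
    {f' : X' ⟶ Y'} {g' : Y' ⟶ Z'} {h' : Z' ⟶ X'⟦(1 : ℤ)⟧}
    (hT : Triangle.mk f g h ∈ distTriang C) (e₁ : X' ≅ X) (e₂ : Y' ≅ Y) (e₃ : Z' ≅ Z)
    (c₁ : f' ≫ e₂.hom = e₁.hom ≫ f) (c₂ : g' ≫ e₃.hom = e₂.hom ≫ g)
    (c₃ : h' ≫ e₁.hom⟦(1 : ℤ)⟧' = e₃.hom ≫ h) : Triangle.mk f' g' h' ∈ distTriang C :=
  isomorphic_distinguished _ hT _ (Triangle.isoMk _ _ e₁ e₂ e₃ c₁ c₂ c₃)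

/-- There are no nonzero morphisms from `X` to `Y`. -/
def NH (X Y : C) : Prop := ∀ f : X ⟶ Y, f = 0

lemma NH.iso_left {X X' Y : C} (h : NH X Y) (e : X ≅ X') : NH X' Y := by
  intro f
  rw [← cancel_epi e.hom, comp_zero]
  exact h _

lemma NH.iso_right {X Y Y' : C} (h : NH X Y) (e : Y ≅ Y') : NH X Y' := by
  intro f
  rw [← cancel_mono e.inv, zero_comp]
  exact h _

lemma NH.ext_left {T : Triangle C} (hT : T ∈ distTriang C) {Z : C} (h₁ : NH T.obj₁ Z)
    (h₃ : NH T.obj₃ Z) : NH T.obj₂ Z := by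
  intro f
  obtain ⟨g, hg⟩ := T.yoneda_exact₂ hT f (h₁ _)
  rw [hg, h₃ g, comp_zero]

lemma NH.ext_right {T : Triangle C} (hT : T ∈ distTriang C) {Z : C} (h₁ : NH Z T.obj₁)
    (h₃ : NH Z T.obj₃) : NH Z T.obj₂ := by
  intro f
  obtain ⟨g, hg⟩ := T.coyoneda_exact₂ hT f (h₃ _)
  rw [hg, h₁ g, zero_comp]

lemma NH.shift {X Y : C} (h : NH X Y) (n : ℤ) : NH (X⟦n⟧) (Y⟦n⟧) := by
  intro f
  obtain ⟨g, rfl⟩ := (shiftFunctor C n).map_surjective f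
  rw [h g, Functor.map_zero]

lemma NH.zero_left {X Y : C} (h : IsZero X) : NH X Y := fun f => h.eq_of_src f 0

lemma NH.zero_right {X Y : C} (h : IsZero Y) : NH X Y := fun f => h.eq_of_tgt f 0

lemma NH.shifts {X Y : C} (h : ∀ n : ℤ, 1 ≤ n → NH X (Y⟦n⟧)) (i j : ℤ) (hij : i < j) :
    NH (X⟦i⟧) (Y⟦j⟧) :=
  ((h (j - i) (by omega)).shift i).iso_right
    ((shiftFunctorAdd' C (j - i) i j (by omega)).app Y).symm

lemma GE_shift (w : WeightStructure C) {Y : C} (hY : Y ∈ w.GE) (k : ℕ) :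
    Y⟦(k : ℤ)⟧ ∈ w.GE := by
  induction k with
  | zero =>
    exact w.retract_GE hY ((shiftFunctorZero C ℤ).app Y).hom ((shiftFunctorZero C ℤ).app Y).inv
      (by simp)
  | succ k ih =>
    let e := (shiftFunctorAdd' C (k : ℤ) 1 ((k + 1 : ℕ) : ℤ) (by simp)).app Y
    exact w.retract_GE (w.shift_GE _ ih) e.hom e.inv e.hom_inv_id

lemma NH_heart (w : WeightStructure C) {X Y : C} (hX : X ∈ w.heart) (hY : Y ∈ w.heart)
    (i j : ℤ) (hij : i < j) : NH (X⟦i⟧) (Y⟦j⟧) := by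
  apply NH.shifts _ i j hij
  intro n hn
  obtain ⟨k, rfl⟩ : ∃ k : ℕ, n = (k : ℤ) + 1 := ⟨(n - 1).toNat, by omega⟩
  exact NH.iso_right (w.orthogonality X hX.1 _ (GE_shift w hY.2 k))
    ((shiftFunctorAdd' C (k : ℤ) 1 _ rfl).app Y).symm

variable (w : WeightStructure C) (S : MorphismProperty C)

/-- `S` consists of morphisms of the heart. -/
def HS : Prop := ∀ ⦃X Y : C⦄ (f : X ⟶ Y), S f → X ∈ w.heart ∧ Y ∈ w.heart

variable {w S}

lemma NH_heart_cone (hS : HS w S) {X K : C} (hX : X ∈ w.heart) (hK : K ∈ conesOf S)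
    (i j : ℤ) (hij : i < j) : NH (X⟦i⟧) (K⟦j⟧) := by
  obtain ⟨A, B, s, a, b, hs, hT⟩ := hK
  refine NH.ext_right (Triangle.shift_distinguished _ (rot_of_distTriang _ hT) j)
    (NH_heart w hX (hS _ hs).2 i j hij) ?_
  exact (NH_heart w hX (hS _ hs).1 i (1 + j) (by omega)).iso_right
    ((shiftFunctorAdd' C 1 j _ rfl).app A)

lemma NH_cone_left {K Z : C} (hK : K ∈ conesOf S) (i : ℤ)
    (h : ∀ ⦃X Y : C⦄ (f : X ⟶ Y), S f → NH (Y⟦i⟧) Z ∧ NH (X⟦1 + i⟧) Z) : NH (K⟦i⟧) Z := by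
  obtain ⟨A, B, s, a, b, hs, hT⟩ := hK
  refine NH.ext_left (Triangle.shift_distinguished _ (rot_of_distTriang _ hT) i)
    (h _ hs).1 ?_
  exact ((h _ hs).2).iso_left ((shiftFunctorAdd' C 1 i _ rfl).app A)

lemma NH_cone_heart (hS : HS w S) {X K : C} (hX : X ∈ w.heart) (hK : K ∈ conesOf S)
    (i j : ℤ) (hij : i + 1 < j) : NH (K⟦i⟧) (X⟦j⟧) :=
  NH_cone_left hK i fun _ _ _ hs =>
    ⟨NH_heart w (hS _ hs).2 hX i j (by omega), NH_heart w (hS _ hs).1 hX _ j (by omega)⟩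

lemma NH_cone_cone (hS : HS w S) {K K' : C} (hK : K ∈ conesOf S) (hK' : K' ∈ conesOf S)
    (i j : ℤ) (hij : i + 1 < j) : NH (K⟦i⟧) (K'⟦j⟧) :=
  NH_cone_left hK i fun _ _ _ hs =>
    ⟨NH_heart_cone hS (hS _ hs).2 hK' i j (by omega),
      NH_heart_cone hS (hS _ hs).1 hK' _ j (by omega)⟩

lemma conesOf_iso {K K' : C} (hK : K ∈ conesOf S) (e : K ≅ K') : K' ∈ conesOf S := by
  obtain ⟨A, B, s, a, b, hs, hT⟩ := hK
  refine ⟨A, B, s, a ≫ e.hom, e.inv ≫ b, hs, ?_⟩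
  exact dist_of_iso hT (Iso.refl _) (Iso.refl _) e.symm (by simp) (by simp) (by simp)

variable (S)

/-- `𝔻_{≥ 0}` -/
def GG : ObjectProperty C :=
  extClosure {X | ∃ (Y : C) (l : ℤ), 0 ≤ l ∧ Y ∈ conesOf S ∧ X = Y⟦l⟧}

/-- `𝔻_{≤ -1}` -/
def LL : ObjectProperty C :=
  extClosure {X | ∃ (Y : C) (l : ℤ), l ≤ -1 ∧ Y ∈ conesOf S ∧ X = Y⟦l⟧}

lemma extClosure_iso {E : Set C} {X Y : C} (h : extClosure E X) (e : X ≅ Y) :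
    extClosure E Y :=
  extClosure.ext₂ (Triangle.mk e.hom (0 : Y ⟶ 0) 0)
    (dist_of_iso (contractible_distinguished X)
      (Iso.refl _) e.symm (Iso.refl _) (by simp) (by simp) (by simp))
    h (extClosure.zero _ (isZero_zero C))

lemma extClosure_closed (E : Set C) {X : C}
    (h : ObjectProperty.extensionProduct (extClosure E) (extClosure E) X) : extClosure E X := by
  obtain ⟨Y, Z, f, g, k, hT, h₁, h₃⟩ := h
  exact extClosure.ext₂ _ hT h₁ h₃

variable {S}

lemma GG_le {X : C} (h : GG S X) : genSubcat (conesOf S) X := by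
  induction h with
  | of X hX => obtain ⟨Y, l, -, hY, rfl⟩ := hX; exact genSub.shift _ _ (genSub.of _ hY)
  | zero X hX => exact genSub.zero _ hX
  | ext₂ T hT _ _ h₁ h₃ => exact genSub.ext₂ T hT h₁ h₃

lemma LL_le {X : C} (h : LL S X) : genSubcat (conesOf S) X := by
  induction h with
  | of X hX => obtain ⟨Y, l, -, hY, rfl⟩ := hX; exact genSub.shift _ _ (genSub.of _ hY)
  | zero X hX => exact genSub.zero _ hX
  | ext₂ T hT _ _ h₁ h₃ => exact genSub.ext₂ T hT h₁ h₃

lemma NH_GG {Z E : C} (h : ∀ K ∈ conesOf S, ∀ j : ℤ, 1 ≤ j → NH Z (K⟦j⟧)) (hE : GG S E) :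
    NH Z (E⟦(1 : ℤ)⟧) := by
  induction hE with
  | of X hX =>
    obtain ⟨Y, l, hl, hY, rfl⟩ := hX
    exact (h Y hY (l + 1) (by omega)).iso_right ((shiftFunctorAdd' C l 1 _ rfl).app Y)
  | zero X hX => exact NH.zero_right ((shiftFunctor C (1 : ℤ)).map_isZero hX)
  | ext₂ T hT _ _ h₁ h₃ => exact NH.ext_right (Triangle.shift_distinguished _ hT 1) h₁ h₃

lemma NH_LL {Z E : C} (h : ∀ K ∈ conesOf S, ∀ j : ℤ, j ≤ -1 → NH (K⟦j⟧) Z) (hE : LL S E) :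
    NH E Z := by
  induction hE with
  | of X hX =>
    obtain ⟨Y, l, hl, hY, rfl⟩ := hX
    exact h Y hY l hl
  | zero X hX => exact NH.zero_left hX
  | ext₂ T hT _ _ h₁ h₃ => exact NH.ext_left hT h₁ h₃

lemma NH_heart_GG (hS : HS w S) {X E : C} (hX : X ∈ w.heart) (hE : GG S E) :
    NH X (E⟦(1 : ℤ)⟧) :=
  NH_GG (fun K hK j hj => (NH_heart_cone hS hX hK 0 j (by omega)).iso_left
    ((shiftFunctorZero C ℤ).app X)) hE

lemma NH_LL_heart (hS : HS w S) {X E : C} (hX : X ∈ w.heart) (hE : LL S E) :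
    NH E (X⟦(1 : ℤ)⟧) :=
  NH_LL (fun K hK j hj => NH_cone_heart hS hX hK j 1 (by omega)) hE

lemma NH_LL_GG (hS : HS w S) {E E' : C} (hE : LL S E) (hE' : GG S E') :
    NH E (E'⟦(1 : ℤ)⟧) :=
  NH_LL (fun K hK j hj => NH_GG
    (fun K' hK' j' hj' => NH_cone_cone hS hK hK' j j' (by omega)) hE') hE

instance : (LL S).ContainsZero := ⟨0, isZero_zero C, extClosure.zero _ (isZero_zero C)⟩
instance : (GG S).ContainsZero := ⟨0, isZero_zero C, extClosure.zero _ (isZero_zero C)⟩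

lemma swap (hS : HS w S) : ObjectProperty.extensionProduct (GG S) (LL S) ≤
    ObjectProperty.extensionProduct (LL S) (GG S) := by
  rintro X ⟨Y, Z, f, g, h, hT, hY, hZ⟩
  obtain ⟨e, -, -⟩ := exists_iso_binaryBiproduct_of_distTriang _ hT (NH_LL_GG hS hZ hY h)
  refine ObjectProperty.prop_of_iso _ (e ≪≫ biprod.braiding _ _).symm ?_
  exact ⟨_, _, _, _, _, binaryBiproductTriangle_distinguished Z Y, hZ, hY⟩

open ObjectProperty in
lemma decomp_ext (hS : HS w S) :
    extensionProduct (extensionProduct (LL S) (GG S)) (extensionProduct (LL S) (GG S)) ≤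
      extensionProduct (LL S) (GG S) := by
  rw [extensionProduct_assoc, ← extensionProduct_assoc (GG S)]
  refine (monotone_extensionProduct_right _
    (monotone_extensionProduct_left _ (swap hS))).trans ?_
  rw [extensionProduct_assoc (LL S), ← extensionProduct_assoc (LL S) (LL S)]
  refine (monotone_extensionProduct_left _ ?_).trans
    (monotone_extensionProduct_right _ ?_)
  all_goals exact fun _ => extClosure_closed _

lemma decomp (hS : HS w S) {K : C} (hK : genSubcat (conesOf S) K) (m : ℤ) :
    ObjectProperty.extensionProduct (LL S) (GG S) (K⟦m⟧) := by
  induction hK generalizing m with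
  | of X hX =>
    by_cases hm : 0 ≤ m
    · exact ObjectProperty.le_extensionProduct_right _ _
        (extClosure.of _ ⟨X, m, hm, hX, rfl⟩)
    · exact ObjectProperty.le_extensionProduct_left _ _
        (extClosure.of _ ⟨X, m, by omega, hX, rfl⟩)
  | zero X hX =>
    exact ObjectProperty.le_extensionProduct_right _ _
      (extClosure.zero _ ((shiftFunctor C m).map_isZero hX))
  | shift X n hX ih =>
    exact ObjectProperty.prop_of_iso _ ((shiftFunctorAdd' C n m _ rfl).app X) (ih (n + m))
  | ext₂ T hT _ _ h₁ h₃ =>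
    exact decomp_ext hS _ ⟨_, _, _, _, _, Triangle.shift_distinguished _ hT m, h₁ m, h₃ m⟩

lemma decomp' (hS : HS w S) {K : C} (hK : genSubcat (conesOf S) K) :
    ObjectProperty.extensionProduct (LL S) (GG S) K :=
  ObjectProperty.prop_of_iso _ ((shiftFunctorZero C ℤ).app K) (decomp hS hK 0)

/-- `t` has a cone in `𝔻_{≥ 0}`. -/
def TG (S : MorphismProperty C) {Y Y' : C} (t : Y ⟶ Y') : Prop :=
  ∃ (E : C) (g : Y' ⟶ E) (h : E ⟶ Y⟦(1 : ℤ)⟧), Triangle.mk t g h ∈ distTriang C ∧ GG S E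

lemma trunc (hS : HS w S) {Y Y' : C} (hY : Y ∈ w.heart) (t : Y ⟶ Y')
    (ht : (genSubcat (conesOf S)).trW t) :
    ∃ (Y'' : C) (s : Y' ⟶ Y''), (genSubcat (conesOf S)).trW s ∧ TG S (t ≫ s) := by
  obtain ⟨E, g, h, hT, hE⟩ := ht
  obtain ⟨E₁, E₂, a, b, c, hT', h₁, h₂⟩ := decomp' hS hE
  obtain ⟨e, he⟩ : ∃ e : E₁ ⟶ Y', a = e ≫ g :=
    Triangle.coyoneda_exact₃ _ hT a (NH_LL_heart hS hY h₁ (a ≫ h))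
  obtain ⟨Y'', s, k, hT''⟩ := distinguished_cocone_triangle e
  let o := Triangulated.someOctahedron he.symm hT'' (rot_of_distTriang _ hT) hT'
  refine ⟨Y'', s, ⟨_, _, _, rot_of_distTriang _ hT'', genSub.shift _ _ (LL_le h₁)⟩,
    E₂, o.m₁, o.m₃, ?_, h₂⟩
  rw [rotate_distinguished_triangle]
  have h4 : -((t ≫ s)⟦(1 : ℤ)⟧') = (-(t⟦(1 : ℤ)⟧')) ≫ s⟦(1 : ℤ)⟧' := by simp
  have h5 : Triangle.mk o.m₁ o.m₃ (-((t ≫ s)⟦(1 : ℤ)⟧')) ∈ distTriang C := by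
    rw [h4]
    exact o.mem
  exact h5

end WLoc

namespace WLoc

variable {w : WeightStructure C} {S : MorphismProperty C}
variable {A' : Type u'} [Category.{v'} A'] [Preadditive A']

/-- Natural additive families. -/
@[ext]
structure Fam {H : Type*} [Category H] {E : Type*} [Category E] [Preadditive E]
    (L : H ⥤ E) (F : H ⥤ A') (e : E) (Z : A') where
  app : ∀ W : H, (L.obj W ⟶ e) → (F.obj W ⟶ Z)
  add : ∀ (W : H) (x y : L.obj W ⟶ e), app W (x + y) = app W x + app W y
  nat : ∀ (V W : H) (f : V ⟶ W) (x : L.obj W ⟶ e), app V (L.map f ≫ x) = F.map f ≫ app W x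

namespace Fam

variable {H : Type*} [Category H] {E : Type*} [Category E] [Preadditive E]
    {L : H ⥤ E} {F : H ⥤ A'} {e e' e'' : E} {Z : A'}

lemma app_zero (α : Fam L F e Z) (W : H) : α.app W 0 = 0 := by
  have := α.add W 0 0
  simpa using this

lemma app_sub (α : Fam L F e Z) (W : H) (x y : L.obj W ⟶ e) :
    α.app W (x - y) = α.app W x - α.app W y := by
  have := α.add W (x - y) y
  rw [sub_add_cancel] at this
  rw [this, add_sub_cancel_right]

/-- Precomposition. -/
@[simps]
def precomp (t : e ⟶ e') (α : Fam L F e' Z) : Fam L F e Z where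
  app W x := α.app W (x ≫ t)
  add W x y := by rw [Preadditive.add_comp, α.add]
  nat V W f x := by rw [Category.assoc, α.nat]

lemma precomp_comp (t : e ⟶ e') (t' : e' ⟶ e'') (α : Fam L F e'' Z) :
    α.precomp (t ≫ t') = (α.precomp t').precomp t := by
  ext W x
  simp

lemma of_rel (R : ∀ W : H, (L.obj W ⟶ e) → (F.obj W ⟶ Z) → Prop)
    (tot : ∀ W x, ∃ v, R W x v)
    (sub : ∀ W x y v v', R W x v → R W y v' → R W (x - y) (v - v'))
    (zero : ∀ W v, R W 0 v → v = 0)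
    (nat : ∀ V W (f : V ⟶ W) x v, R W x v → R V (L.map f ≫ x) (F.map f ≫ v)) :
    ∃ α : Fam L F e Z, ∀ W x, R W x (α.app W x) := by
  choose φ hφ using tot
  have uniq : ∀ W x v v', R W x v → R W x v' → v = v' := by
    intro W x v v' h h'
    have := sub _ _ _ _ _ h h'
    rw [sub_self] at this
    exact sub_eq_zero.1 (zero _ _ this)
  have h0 : ∀ W, R W 0 0 := fun W => by
    have := sub _ _ _ _ _ (hφ W 0) (hφ W 0)
    simpa using this
  refine ⟨⟨φ, ?_, ?_⟩, hφ⟩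
  · intro W x y
    have := sub _ _ _ _ _ (hφ W x) (sub _ _ _ _ _ (h0 W) (hφ W y))
    simp only [zero_sub, sub_neg_eq_add] at this
    exact uniq _ _ _ _ (hφ _ _) this
  · intro V W f x
    exact uniq _ _ _ _ (hφ _ _) (nat _ _ _ _ _ (hφ _ _))

end Fam

/-- families on objects of `C` -/
abbrev FamC (F : HeartCat w ⥤ A') (Y : C) (Z : A') :=
  Fam (ObjectProperty.ι (· ∈ w.heart)) F Y Z

lemma FamC.nat' {F : HeartCat w ⥤ A'} {Y : C} {Z : A'} (α : FamC F Y Z) {V W : HeartCat w}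
    (f : V.obj ⟶ W.obj) (x : W.obj ⟶ Y) :
    α.app V (f ≫ x) = F.map (ObjectProperty.homMk f : V ⟶ W) ≫ α.app W x :=
  α.nat V W (ObjectProperty.homMk f) x

/-- unique extension of families along `t` -/
def UE (F : HeartCat w ⥤ A') {Y Y' : C} (t : Y ⟶ Y') : Prop :=
  ∀ Z : A', Function.Bijective (fun α : FamC F Y' Z => α.precomp t)

lemma UE.comp {F : HeartCat w ⥤ A'} {Y Y' Y'' : C} {t : Y ⟶ Y'} {t' : Y' ⟶ Y''}
    (h : UE F t) (h' : UE F t') : UE F (t ≫ t') := by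
  intro Z
  convert (h Z).comp (h' Z) using 1
  ext α : 1
  exact α.precomp_comp t t'

lemma UE.of_iso (F : HeartCat w ⥤ A') {Y Y' : C} (t : Y ⟶ Y') [IsIso t] : UE F t := by
  intro Z
  refine Function.bijective_iff_has_inverse.2 ⟨fun α => α.precomp (inv t), ?_, ?_⟩
  · intro α
    ext W x
    simp
  · intro α
    ext W x
    simp

variable (S) in
/-- `F` inverts `S`. -/
def Inv (F : HeartCat w ⥤ A') : Prop :=
  ∀ (X Y : HeartCat w) (s : X.obj ⟶ Y.obj), S s →
        IsIso (F.map (show X ⟶ Y from ObjectProperty.homMk s))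

lemma NH_heart' {X Y : C} (hX : X ∈ w.heart) (hY : Y ∈ w.heart)
    (j : ℤ) (hij : 0 < j) : NH X (Y⟦j⟧) :=
  (NH_heart w hX hY 0 j hij).iso_left ((shiftFunctorZero C ℤ).app X)

lemma fam_cone_zero (hS : HS w S) {F : HeartCat w ⥤ A'} (hF : Inv S F) {K : C}
    (hK : K ∈ conesOf S) {Z : A'} (α : FamC F K Z) (W : HeartCat w) (x : W.obj ⟶ K) :
    α.app W x = 0 := by
  obtain ⟨A, B, s, a, b, hs, hT⟩ := hK
  obtain ⟨hA, hB⟩ := hS s hs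
  obtain ⟨y, rfl⟩ : ∃ y : W.obj ⟶ B, x = y ≫ a :=
    Triangle.coyoneda_exact₃ _ hT x (NH_heart' W.property hA 1 (by omega) _)
  have h0 : s ≫ a = 0 := comp_distTriang_mor_zero₁₂ _ hT
  have := hF ⟨A, hA⟩ ⟨B, hB⟩ s hs
  have h1 := α.nat' (V := ⟨A, hA⟩) (W := ⟨B, hB⟩) s a
  rw [h0, α.app_zero] at h1
  have h2 : α.app ⟨B, hB⟩ a = 0 := by
    rw [← cancel_epi (F.map (show (⟨A, hA⟩ : HeartCat w) ⟶ ⟨B, hB⟩ from ObjectProperty.homMk s)),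
      comp_zero]
    exact h1.symm
  refine (α.nat' (V := W) (W := ⟨B, hB⟩) y a).trans ?_
  rw [h2, comp_zero]

lemma fam_shift_zero (hS : HS w S) {F : HeartCat w ⥤ A'} (hF : Inv S F) {K E : C}
    (hK : K ∈ conesOf S) (l : ℤ) (hl : 0 ≤ l) (i : K⟦l⟧ ≅ E) {Z : A'} (α : FamC F E Z)
    (W : HeartCat w) (x : W.obj ⟶ E) : α.app W x = 0 := by
  by_cases h : l = 0
  · subst h
    exact fam_cone_zero hS hF (conesOf_iso hK (((shiftFunctorZero C ℤ).app K).symm ≪≫ i)) α W x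
  · have : x = 0 := (((NH_heart_cone hS W.property hK 0 l (by omega)).iso_left
      ((shiftFunctorZero C ℤ).app W.obj)).iso_right i) x
    rw [this]
    exact α.app_zero W

lemma UE_of_surj {F : HeartCat w ⥤ A'} {Y Y' : C} (t : Y ⟶ Y')
    (hs : ∀ (W : HeartCat w) (x : W.obj ⟶ Y'), ∃ y, x = y ≫ t)
    (hk : ∀ (Z : A') (α : FamC F Y Z) (W : HeartCat w) (y : W.obj ⟶ Y), y ≫ t = 0 →
      α.app W y = 0) : UE F t := by
  intro Z
  constructor
  · intro α β h
    ext W x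
    obtain ⟨y, rfl⟩ := hs W x
    exact congrArg (fun γ => γ.app W y) h
  · intro α
    obtain ⟨α', h⟩ := Fam.of_rel (L := ObjectProperty.ι (· ∈ w.heart)) (F := F) (e := Y') (Z := Z)
      (fun W x v => ∃ y : W.obj ⟶ Y, x = y ≫ t ∧ v = α.app W y)
      (fun W x => by
        obtain ⟨y, hy⟩ := hs W x
        exact ⟨_, y, hy, rfl⟩)
      (by
        rintro W _ _ _ _ ⟨y, rfl, rfl⟩ ⟨y', rfl, rfl⟩
        exact ⟨y - y', by rw [Preadditive.sub_comp], by rw [← α.app_sub]⟩)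
      (by
        rintro W _ ⟨y, h, rfl⟩
        exact hk _ _ _ _ h.symm)
      (by
        rintro V W f _ _ ⟨y, rfl, rfl⟩
        exact ⟨f.hom ≫ y, by simp, by rw [← α.nat]; rfl⟩)
    refine ⟨α', ?_⟩
    ext W x
    obtain ⟨y, h1, h2⟩ := h W (x ≫ t)
    refine h2.trans (sub_eq_zero.1 ?_)
    rw [← α.app_sub]
    refine hk _ _ _ _ ?_
    rw [Preadditive.sub_comp, sub_eq_zero]
    exact h1.symm

lemma UE_shift (hS : HS w S) {F : HeartCat w ⥤ A'} (hF : Inv S F) {K Y Y' : C}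
    (hK : K ∈ conesOf S) (l : ℤ) (hl : 1 ≤ l) (t : Y ⟶ Y') (g : Y' ⟶ K⟦l⟧)
    (h : K⟦l⟧ ⟶ Y⟦(1 : ℤ)⟧) (hT : Triangle.mk t g h ∈ distTriang C) : UE F t := by
  refine UE_of_surj t (fun W x => Triangle.coyoneda_exact₂ _ hT x ?_) ?_
  · exact ((NH_heart_cone hS W.property hK 0 l (by omega)).iso_left
      ((shiftFunctorZero C ℤ).app W.obj)) _
  · intro Z α W y hy
    obtain ⟨z, rfl⟩ := Triangle.coyoneda_exact₂ _ (inv_rot_of_distTriang _ hT) y hy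
    exact fam_shift_zero hS hF hK (l - 1) (by omega)
      ((shiftFunctorAdd' C l (-1) (l - 1) (by omega)).app K) (α.precomp _) W z

/-- the unit isomorphism -/
noncomputable def un (Y : C) : Y⟦(1 : ℤ)⟧⟦(-1 : ℤ)⟧ ⟶ Y :=
  (shiftEquiv C (1 : ℤ)).unitIso.inv.app Y

lemma un_nat {A Y : C} (a : A ⟶ Y) : a⟦(1 : ℤ)⟧'⟦(-1 : ℤ)⟧' ≫ un Y = un A ≫ a :=
  (shiftEquiv C (1 : ℤ)).unitIso.inv.naturality a

/-- the first morphism of the inverse rotation -/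
noncomputable def iR {K Y : C} (h : K ⟶ Y⟦(1 : ℤ)⟧) : K⟦(-1 : ℤ)⟧ ⟶ Y :=
  -h⟦(-1 : ℤ)⟧' ≫ un Y

lemma iR_comp {A K Y : C} (k : K ⟶ A⟦(1 : ℤ)⟧) (a : A ⟶ Y) :
    iR (k ≫ a⟦(1 : ℤ)⟧') = iR k ≫ a := by
  simp only [iR, Functor.map_comp, Category.assoc, Preadditive.neg_comp, un_nat]

lemma UE_cone (hS : HS w S) {F : HeartCat w ⥤ A'} [F.Additive] (hF : Inv S F) {K Y Y' : C}
    (hK : K ∈ conesOf S) (t : Y ⟶ Y') (g : Y' ⟶ K)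
    (h : K ⟶ Y⟦(1 : ℤ)⟧) (hT : Triangle.mk t g h ∈ distTriang C)
    (hY : ∀ W ∈ w.heart, NH W (Y⟦(1 : ℤ)⟧)) : UE F t := by
  obtain ⟨A, B, s, q, k, hs, hT'⟩ := hK
  obtain ⟨hA, hB⟩ := hS s hs
  obtain ⟨b, hb⟩ : ∃ b : B ⟶ Y', q = b ≫ g :=
    Triangle.coyoneda_exact₃ _ hT q (hY B hB _)
  obtain ⟨a, ha₁, ha₂⟩ : ∃ a : A ⟶ Y, s ≫ b = a ≫ t ∧ k ≫ a⟦(1 : ℤ)⟧' = 𝟙 K ≫ h :=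
    complete_distinguished_triangle_morphism₁ _ _ hT' hT b (𝟙 K) (by
      change q ≫ 𝟙 _ = b ≫ g
      rw [hb, Category.comp_id])
  rw [Category.id_comp] at ha₂
  let A₀ : HeartCat w := ⟨A, hA⟩
  let B₀ : HeartCat w := ⟨B, hB⟩
  let s₀ : A₀ ⟶ B₀ := ObjectProperty.homMk s
  have hs₀ : IsIso (F.map s₀) := hF A₀ B₀ s hs
  have dec : ∀ (W : HeartCat w) (x : W.obj ⟶ Y'), ∃ (xB : W ⟶ B₀) (y : W.obj ⟶ Y),
      x = xB.hom ≫ b + y ≫ t := by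
    intro W x
    obtain ⟨xB, h1⟩ : ∃ xB : W.obj ⟶ B, x ≫ g = xB ≫ q :=
      Triangle.coyoneda_exact₃ _ hT' (x ≫ g) (NH_heart' W.property hA 1 (by omega) _)
    obtain ⟨y, h2⟩ : ∃ y : W.obj ⟶ Y, x - xB ≫ b = y ≫ t :=
      Triangle.coyoneda_exact₂ _ hT (x - xB ≫ b) (by
        change (x - xB ≫ b) ≫ g = 0
        rw [Preadditive.sub_comp, h1, hb, Category.assoc, sub_self])
    refine ⟨ObjectProperty.homMk xB, y, ?_⟩
    rw [← h2]
    simp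
  have key : ∀ (Z : A') (α : FamC F Y Z) (W : HeartCat w) (xB : W ⟶ B₀) (y : W.obj ⟶ Y),
      xB.hom ≫ b + y ≫ t = 0 →
      F.map xB ≫ inv (F.map s₀) ≫ α.app A₀ a + α.app W y = 0 := by
    intro Z α W xB y hxy
    obtain ⟨xA, h1⟩ : ∃ xA : W.obj ⟶ A, xB.hom = xA ≫ s :=
      Triangle.coyoneda_exact₂ _ hT' xB.hom (by
        change xB.hom ≫ q = 0
        have h0 : t ≫ g = 0 := comp_distTriang_mor_zero₁₂ _ hT
        have := congrArg (· ≫ g) hxy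
        simp only [Preadditive.add_comp, Category.assoc, h0, comp_zero, add_zero, ← hb,
          zero_comp] at this
        exact this)
    obtain ⟨z, h2⟩ : ∃ z : W.obj ⟶ _, xA ≫ a + y = z ≫ iR h :=
      Triangle.coyoneda_exact₂ _ (inv_rot_of_distTriang _ hT) (xA ≫ a + y) (by
        change (xA ≫ a + y) ≫ t = 0
        rw [Preadditive.add_comp, Category.assoc, ← ha₁, ← Category.assoc, ← h1, hxy])
    rw [← ha₂, iR_comp, ← Category.assoc] at h2
    have h3 : iR k ≫ s = 0 :=
      comp_distTriang_mor_zero₁₂ _ (inv_rot_of_distTriang _ hT')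
    generalize hv : z ≫ iR k = v at h2
    replace h3 : v ≫ s = 0 := by rw [← hv, Category.assoc, h3, comp_zero]
    let xA₀ : W ⟶ A₀ := ObjectProperty.homMk xA
    let v₀ : W ⟶ A₀ := ObjectProperty.homMk v
    have h4 : xB = xA₀ ≫ s₀ := by
      ext
      exact h1
    have h5 : v₀ ≫ s₀ = 0 := by
      ext
      exact h3
    have h6 : F.map v₀ = 0 := by
      rw [← cancel_mono (F.map s₀), ← F.map_comp, h5, zero_comp, F.map_zero]
    have h7 : α.app W (xA ≫ a + y) = F.map xA₀ ≫ α.app A₀ a + α.app W y := by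
      rw [← FamC.nat' (w := w) α (V := W) (W := A₀) xA a]
      exact α.add W _ _
    have h8 : α.app W (xA ≫ a + y) = 0 := by
      rw [h2]
      refine (FamC.nat' (w := w) α (V := W) (W := A₀) v a).trans ?_
      change F.map v₀ ≫ _ = 0
      rw [h6, zero_comp]
    rw [h4, F.map_comp, Category.assoc, IsIso.hom_inv_id_assoc, ← h7, h8]
  intro Z
  constructor
  · intro α β hαβ
    have ht : ∀ (W : HeartCat w) (y : W.obj ⟶ Y), α.app W (y ≫ t) = β.app W (y ≫ t) :=
      fun W y => congrArg (fun γ => γ.app W y) hαβ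
    have hb' : α.app B₀ b = β.app B₀ b := by
      rw [← cancel_epi (F.map s₀)]
      have e1 := FamC.nat' (w := w) α (V := A₀) (W := B₀) s b
      have e2 := FamC.nat' (w := w) β (V := A₀) (W := B₀) s b
      rw [ha₁] at e1 e2
      refine e1.symm.trans (.trans ?_ e2)
      exact ht A₀ a
    ext W x
    obtain ⟨xB, y, hx⟩ := dec W x
    have e3 : ∀ γ : FamC F Y' Z, γ.app W x = F.map xB ≫ γ.app B₀ b + γ.app W (y ≫ t) := by
      intro γ
      rw [← γ.nat, hx]
      exact γ.add W _ _
    rw [e3, e3, hb', ht]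
  · intro α
    obtain ⟨α', h⟩ := Fam.of_rel (L := ObjectProperty.ι (· ∈ w.heart)) (F := F) (e := Y') (Z := Z)
      (fun W x v => ∃ (xB : W ⟶ B₀) (y : W.obj ⟶ Y), x = xB.hom ≫ b + y ≫ t ∧
        v = F.map xB ≫ inv (F.map s₀) ≫ α.app A₀ a + α.app W y)
      (fun W x => by
        obtain ⟨xB, y, hy⟩ := dec W x
        exact ⟨_, xB, y, hy, rfl⟩)
      (by
        rintro W _ _ _ _ ⟨x, y, rfl, rfl⟩ ⟨x', y', rfl, rfl⟩
        refine ⟨x - x', y - y', ?_, ?_⟩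
        · change _ = (x.hom - x'.hom) ≫ b + _
          rw [Preadditive.sub_comp, Preadditive.sub_comp]
          abel
        · have : α.app W (y - y') = α.app W y - α.app W y' := α.app_sub W y y'
          rw [this, F.map_sub, Preadditive.sub_comp]
          abel)
      (by
        rintro W _ ⟨x, y, h, rfl⟩
        exact key _ _ _ _ _ h.symm)
      (by
        rintro V W f _ _ ⟨x, y, rfl, rfl⟩
        refine ⟨f ≫ x, f.hom ≫ y, by simp, ?_⟩
        have : α.app V (f.hom ≫ y) = F.map f ≫ α.app W y := α.nat V W f y
        rw [this]
        simp)
    refine ⟨α', ?_⟩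
    ext W x
    change W.obj ⟶ Y at x
    obtain ⟨xB, y, h1, h2⟩ := h W (x ≫ t)
    refine h2.trans ?_
    have h3 := key Z α W xB (y - x) (by
      rw [Preadditive.sub_comp, add_sub, sub_eq_zero]
      exact h1.symm)
    have : α.app W (y - x) = α.app W y - α.app W x := α.app_sub W y x
    rw [this, add_sub, sub_eq_zero] at h3
    exact h3

lemma NH_TG (hS : HS w S) {Y Y' E : C} {t : Y ⟶ Y'} {g : Y' ⟶ E}
    {h : E ⟶ Y⟦(1 : ℤ)⟧} (hT : Triangle.mk t g h ∈ distTriang C) (hE : GG S E)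
    (hY : ∀ W ∈ w.heart, NH W (Y⟦(1 : ℤ)⟧)) : ∀ W ∈ w.heart, NH W (Y'⟦(1 : ℤ)⟧) :=
  fun W hW => NH.ext_right (Triangle.shift_distinguished _ hT 1) (hY W hW)
    (NH_heart_GG hS hW hE)

lemma UE_GG (hS : HS w S) {F : HeartCat w ⥤ A'} [F.Additive] (hF : Inv S F) {E : C}
    (hE : GG S E) : ∀ {Y Y' : C} (t : Y ⟶ Y') (g : Y' ⟶ E)
    (h : E ⟶ Y⟦(1 : ℤ)⟧) (_ : Triangle.mk t g h ∈ distTriang C)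
    (_ : ∀ W ∈ w.heart, NH W (Y⟦(1 : ℤ)⟧)), UE F t := by
  induction hE with
  | of X hX =>
    obtain ⟨K, l, hl, hK, rfl⟩ := hX
    intro Y Y' t g h hT hY
    by_cases h0 : l = 0
    · subst h0
      exact UE_cone hS hF (conesOf_iso hK ((shiftFunctorZero C ℤ).app K).symm) t g h hT hY
    · exact UE_shift hS hF hK l (by omega) t g h hT
  | zero X hX =>
    intro Y Y' t g h hT hY
    have : IsIso t := (Triangle.isZero₃_iff_isIso₁ _ hT).1 hX
    exact UE.of_iso F t
  | ext₂ T hT' hE₁ hE₃ h₁ h₃ =>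
    intro Y Y' t g h hT hY
    obtain ⟨Y₁, v, h', hT''⟩ := distinguished_cocone_triangle₁ (g ≫ T.mor₂)
    let o := Triangulated.someOctahedron' rfl hT hT' hT''
    have e1 := h₁ _ _ _ o.mem hY
    have e2 := h₃ _ _ _ hT'' (NH_TG hS o.mem hE₁ hY)
    rw [← o.comm₁]
    exact e1.comp e2

lemma UE_TG (hS : HS w S) {F : HeartCat w ⥤ A'} [F.Additive] (hF : Inv S F) {Y Y' : C}
    (hY : Y ∈ w.heart) {t : Y ⟶ Y'} (ht : TG S t) : UE F t := by
  obtain ⟨E, g, h, hT, hE⟩ := ht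
  exact UE_GG hS hF hE t g h hT (fun W hW => NH_heart' hW hY 1 (by omega))

end WLoc

namespace WLoc

variable {w : WeightStructure C} {S : MorphismProperty C}
variable {A' : Type u'} [Category.{v'} A'] [Preadditive A']

variable (S) in
/-- the class of morphisms to be inverted -/
abbrev DW : MorphismProperty C := (genSubcat (conesOf S)).trW

variable (S) in
/-- families on objects of the Verdier quotient -/
abbrev FamQ (F : HeartCat w ⥤ A') (Y : (DW S).Localization) (Z : A') :=
  Fam (ObjectProperty.ι (· ∈ w.heart) ⋙ (DW S).Q) F Y Z

/-- restriction of families along a morphism `QY ⟶ M` -/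
noncomputable def FamQ.res {F : HeartCat w ⥤ A'} {M : (DW S).Localization} {Z : A'} (γ : FamQ S F M Z)
    (Y : C) (p : (DW S).Q.obj Y ⟶ M) : FamC F Y Z where
  app W x := γ.app W ((DW S).Q.map x ≫ p)
  add W x y := by
    rw [Functor.map_add, Preadditive.add_comp]
    exact γ.add W _ _
  nat V W f x := by
    rw [Functor.map_comp, Category.assoc]
    exact γ.nat V W f _

lemma TG_DW {Y Y' : C} {t : Y ⟶ Y'} (ht : TG S t) : DW S t := by
  obtain ⟨E, g, h, hT, hE⟩ := ht
  exact ⟨E, g, h, hT, GG_le hE⟩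

lemma frac (hS : HS w S) {W Y : C} (hY : Y ∈ w.heart)
    (φ : (DW S).Q.obj W ⟶ (DW S).Q.obj Y) :
    ∃ (Y' : C) (t : Y ⟶ Y') (f : W ⟶ Y'), TG S t ∧ (DW S).Q.map f = φ ≫ (DW S).Q.map t := by
  obtain ⟨ψ, hψ⟩ := Localization.exists_leftFraction (DW S).Q (DW S) φ
  obtain ⟨Y'', s, hs, ht⟩ := trunc hS hY ψ.s ψ.hs
  refine ⟨Y'', ψ.s ≫ s, ψ.f ≫ s, ht, ?_⟩
  rw [Functor.map_comp, Functor.map_comp, hψ, MorphismProperty.LeftFraction.map_comp_map_s_assoc]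

lemma FamQ_ext (hS : HS w S) {F : HeartCat w ⥤ A'} [F.Additive] (hF : Inv S F) {Y : C}
    (hY : Y ∈ w.heart) {Z : A'} (γ₁ γ₂ : FamQ S F ((DW S).Q.obj Y) Z)
    (h : ∀ (W : HeartCat w) (x : W.obj ⟶ Y), γ₁.app W ((DW S).Q.map x) =
      γ₂.app W ((DW S).Q.map x)) : γ₁ = γ₂ := by
  ext W φ
  change (DW S).Q.obj W.obj ⟶ _ at φ
  obtain ⟨Y', t, f, ht, hf⟩ := frac hS hY φ
  have : IsIso ((DW S).Q.map t) := Localization.inverts (DW S).Q (DW S) t (TG_DW ht)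
  have h1 : φ = (DW S).Q.map f ≫ inv ((DW S).Q.map t) := by simp [hf]
  have h2 : γ₁.res Y' (inv ((DW S).Q.map t)) = γ₂.res Y' (inv ((DW S).Q.map t)) := by
    apply (UE_TG hS hF hY ht Z).1
    ext W x
    change γ₁.app W ((DW S).Q.map (x ≫ t) ≫ _) = γ₂.app W ((DW S).Q.map (x ≫ t) ≫ _)
    rw [Functor.map_comp, Category.assoc, IsIso.hom_inv_id, Category.comp_id]
    exact h W x
  rw [h1]
  exact congrArg (fun γ => γ.app W f) h2

lemma common (hS : HS w S) {Y Y₁ Y₂ : C} (hY : Y ∈ w.heart) (t₁ : Y ⟶ Y₁) (t₂ : Y ⟶ Y₂)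
    (h₁ : TG S t₁) (h₂ : TG S t₂) :
    ∃ (Y' : C) (r₁ : Y₁ ⟶ Y') (r₂ : Y₂ ⟶ Y'), t₁ ≫ r₁ = t₂ ≫ r₂ ∧ TG S (t₁ ≫ r₁) := by
  obtain ⟨ψ, hψ⟩ := (MorphismProperty.RightFraction.mk t₁ (TG_DW h₁) t₂).exists_leftFraction
  obtain ⟨Y', s, hs, ht⟩ := trunc hS hY (t₂ ≫ ψ.s)
    (MorphismProperty.comp_mem _ _ _ (TG_DW h₂) ψ.hs)
  have e : t₁ ≫ ψ.f = t₂ ≫ ψ.s := hψ.symm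
  refine ⟨Y', ψ.f ≫ s, ψ.s ≫ s, ?_, ?_⟩
  · rw [← Category.assoc, e, Category.assoc]
  · rw [← Category.assoc, e]
    exact ht

lemma FamQ_exists (hS : HS w S) {F : HeartCat w ⥤ A'} [F.Additive] (hF : Inv S F) {Y : C}
    (hY : Y ∈ w.heart) {Z : A'} (β : FamC F Y Z) :
    ∃ γ : FamQ S F ((DW S).Q.obj Y) Z, ∀ (W : HeartCat w) (x : W.obj ⟶ Y),
      γ.app W ((DW S).Q.map x) = β.app W x := by
  have lift : ∀ {Y' Y'' : C} (t : Y ⟶ Y') (r : Y' ⟶ Y''), TG S t → TG S (t ≫ r) →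
      ∀ α' : FamC F Y' Z, α'.precomp t = β → ∀ α'' : FamC F Y'' Z, α''.precomp (t ≫ r) = β →
      α''.precomp r = α' := by
    intro Y' Y'' t r ht htr α' h' α'' h''
    apply (UE_TG hS hF hY ht Z).1
    change (α''.precomp r).precomp t = α'.precomp t
    rw [← Fam.precomp_comp]
    exact h''.trans h'.symm
  have hzero : ∀ (W : HeartCat w) (v : F.obj W ⟶ Z), (∃ (Y' : C) (t : Y ⟶ Y') (f : W.obj ⟶ Y')
      (α' : FamC F Y' Z), TG S t ∧ (DW S).Q.map f = 0 ∧ α'.precomp t = β ∧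
      v = α'.app W f) → v = 0 := by
    rintro W _ ⟨Y', t, f, α', ht, hf, hα, rfl⟩
    rw [← (DW S).Q.map_zero, MorphismProperty.map_eq_iff_postcomp (DW S).Q (DW S)] at hf
    obtain ⟨Y₁, s, hs, hfs⟩ := hf
    obtain ⟨Y₂, s', hs', ht'⟩ := trunc hS hY (t ≫ s)
      (MorphismProperty.comp_mem _ _ _ (TG_DW ht) hs)
    rw [Category.assoc] at ht'
    obtain ⟨α'', hα''⟩ := (UE_TG hS hF hY ht' Z).2 β
    rw [← lift t (s ≫ s') ht ht' α' hα α'' hα'']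
    have : f ≫ s ≫ s' = 0 := by rw [← Category.assoc, hfs, zero_comp, zero_comp]
    refine (congrArg (α''.app W) this).trans ?_
    exact α''.app_zero W
  obtain ⟨γ, h⟩ := Fam.of_rel (L := ObjectProperty.ι (· ∈ w.heart) ⋙ (DW S).Q) (F := F)
    (e := (DW S).Q.obj Y) (Z := Z)
    (fun W φ v => ∃ (Y' : C) (t : Y ⟶ Y') (f : W.obj ⟶ Y') (α' : FamC F Y' Z),
      TG S t ∧ (DW S).Q.map f = φ ≫ (DW S).Q.map t ∧ α'.precomp t = β ∧ v = α'.app W f)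
    (fun W φ => by
      obtain ⟨Y', t, f, ht, hf⟩ := frac hS hY φ
      obtain ⟨α', hα⟩ := (UE_TG hS hF hY ht Z).2 β
      exact ⟨_, Y', t, f, α', ht, hf, hα, rfl⟩)
    (by
      rintro W φ₁ φ₂ _ _ ⟨Y₁, t₁, f₁, α₁, ht₁, hf₁, hα₁, rfl⟩ ⟨Y₂, t₂, f₂, α₂, ht₂, hf₂, hα₂, rfl⟩
      obtain ⟨Y', r₁, r₂, hr, ht⟩ := common hS hY t₁ t₂ ht₁ ht₂
      obtain ⟨α, hα⟩ := (UE_TG hS hF hY ht Z).2 β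
      have l₁ := lift t₁ r₁ ht₁ ht α₁ hα₁ α hα
      have l₂ := lift t₂ r₂ ht₂ (hr ▸ ht) α₂ hα₂ α (by rw [← hr]; exact hα)
      refine ⟨Y', t₁ ≫ r₁, f₁ ≫ r₁ - f₂ ≫ r₂, α, ht, ?_, hα, ?_⟩
      · rw [Functor.map_sub, Preadditive.sub_comp]
        congr 1
        · rw [Functor.map_comp, hf₁, Functor.map_comp, Category.assoc]
        · rw [hr, Functor.map_comp, hf₂, Functor.map_comp, Category.assoc]
      · rw [← l₁, ← l₂]
        exact (α.app_sub W (f₁ ≫ r₁) (f₂ ≫ r₂)).symm)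
    (by
      rintro W _ ⟨Y', t, f, α', ht, hf, hα, rfl⟩
      exact hzero W _ ⟨Y', t, f, α', ht, by rw [hf, zero_comp], hα, rfl⟩)
    (by
      rintro V W f _ _ ⟨Y', t, g, α', ht, hg, hα, rfl⟩
      refine ⟨Y', t, f.hom ≫ g, α', ht, ?_, hα, ?_⟩
      · rw [Functor.map_comp, hg, Category.assoc]
        rfl
      · exact (α'.nat V W f g).symm)
  refine ⟨γ, fun W x => ?_⟩
  obtain ⟨Y', t, f, α', ht, hf, hα, hv⟩ := h W ((DW S).Q.map x)
  rw [hv, ← sub_eq_zero]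
  refine hzero W _ ⟨Y', t, f - x ≫ t, α', ht, ?_, hα, ?_⟩
  · rw [Functor.map_sub, hf, Functor.map_comp, sub_self]
  · rw [← hα]
    exact (α'.app_sub W f (x ≫ t)).symm

/-- the family given by `F` itself -/
noncomputable def FamC.self (F : HeartCat w ⥤ A') [F.Additive] (Y : HeartCat w) : FamC F Y.obj (F.obj Y) where
  app W x := F.map (ObjectProperty.homMk x : W ⟶ Y)
  add W x y := by
    rw [← F.map_add]
    rfl
  nat V W f x := by
    rw [← F.map_comp]
    rfl

/-- postcomposition of a family -/
noncomputable def FamQ.postcomp {F : HeartCat w ⥤ A'} {M : (DW S).Localization} {Z Z' : A'} (γ : FamQ S F M Z)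
    (p : Z ⟶ Z') : FamQ S F M Z' where
  app W x := γ.app W x ≫ p
  add W x y := by rw [γ.add, Preadditive.add_comp]
  nat V W f x := by rw [γ.nat, Category.assoc]

lemma exists_G (hS : HS w S) {F : HeartCat w ⥤ A'} [F.Additive] (hF : Inv S F) :
    ∃ G : HeartLoc w S ⥤ A', G.Additive ∧ uHeart w S ⋙ G = F := by
  have ex := fun Y : HeartCat w => FamQ_exists hS hF Y.property (FamC.self F Y)
  choose γ hγ using ex
  let G : HeartLoc w S ⥤ A' :=
    { obj := fun X => F.obj X
      map := fun {X Y} φ => (γ Y).app X φ.hom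
      map_id := fun X => by
        have := hγ X X (𝟙 _)
        refine (congrArg ((γ X).app X) ((DW S).Q.map_id X.obj).symm).trans (this.trans ?_)
        exact F.map_id X
      map_comp := fun {X Y Z} φ ψ => by
        have : (γ Z).precomp ψ.hom = FamQ.postcomp (γ Y) ((γ Z).app Y ψ.hom) := by
          apply FamQ_ext hS hF Y.property
          intro W x
          refine ((γ Z).nat W Y (ObjectProperty.homMk x) ψ.hom).trans ?_
          refine Eq.trans ?_ (congrArg (· ≫ (γ Z).app Y ψ.hom) (hγ Y W x)).symm
          rfl
        exact congrArg (fun δ => δ.app X φ.hom) this }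
  refine ⟨G, ⟨fun {X Y f g} => (γ Y).add X f.hom g.hom⟩, ?_⟩
  refine CategoryTheory.Functor.ext (fun X => rfl) (fun X Y f => ?_)
  change _ = 𝟙 _ ≫ F.map f ≫ 𝟙 _
  rw [Category.id_comp, Category.comp_id]
  exact hγ Y X f.hom

/-- the family given by a functor `G` -/
noncomputable def FamQ.ofG {F : HeartCat w ⥤ A'} (G : HeartLoc w S ⥤ A') [G.Additive]
    (i : ∀ W : HeartCat w, F.obj W ⟶ G.obj W)
    (hi : ∀ (V W : HeartCat w) (f : V ⟶ W), F.map f ≫ i W = i V ≫ G.map ((uHeart w S).map f))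
    (Y : HeartLoc w S) : FamQ S F ((DW S).Q.obj Y.obj) (G.obj Y) where
  app W x := i W ≫ G.map (InducedCategory.homMk x : (uHeart w S).obj W ⟶ Y)
  add W x y := by
    have e : G.map (InducedCategory.homMk (x + y) : (uHeart w S).obj W ⟶ Y) =
      G.map (InducedCategory.homMk x : (uHeart w S).obj W ⟶ Y) +
      G.map (InducedCategory.homMk y : (uHeart w S).obj W ⟶ Y) :=
      G.map_add (f := (InducedCategory.homMk x : (uHeart w S).obj W ⟶ Y))
        (g := (InducedCategory.homMk y : (uHeart w S).obj W ⟶ Y))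
    exact (congrArg (i W ≫ ·) e).trans (Preadditive.comp_add _ _ _ _ _ _)
  nat V W f x := by
    refine Eq.trans ?_ (Category.assoc _ _ _)
    rw [hi]
    refine Eq.trans ?_ (Category.assoc _ _ _).symm
    congr 1
    exact G.map_comp ((uHeart w S).map f) (InducedCategory.homMk x)

lemma eqToHom_aux {X Y X' Y' : A'} (p : X = X') (q : Y = Y') (f : X ⟶ Y) (g : X' ⟶ Y')
    (h : f = eqToHom p ≫ g ≫ eqToHom q.symm) : f ≫ eqToHom q = eqToHom p ≫ g := by
  subst p q
  simpa using h

lemma uniq_G (hS : HS w S) {F : HeartCat w ⥤ A'} [F.Additive] (hF : Inv S F)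
    (G₁ G₂ : HeartLoc w S ⥤ A') [G₁.Additive] [G₂.Additive]
    (h₁ : uHeart w S ⋙ G₁ = F) (h₂ : uHeart w S ⋙ G₂ = F) : G₁ = G₂ := by
  subst h₁
  have hobj : ∀ X : HeartLoc w S, G₁.obj X = G₂.obj X := fun X =>
    Functor.congr_obj h₂.symm X
  have hmap : ∀ (V W : HeartCat w) (f : V ⟶ W), G₁.map ((uHeart w S).map f) ≫ eqToHom (hobj W) =
      eqToHom (hobj V) ≫ G₂.map ((uHeart w S).map f) := by
    intro V W f
    exact eqToHom_aux _ _ _ _ (Functor.congr_hom h₂.symm f)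
  refine CategoryTheory.Functor.ext hobj (fun X Y φ => ?_)
  have key : FamQ.postcomp (FamQ.ofG (F := uHeart w S ⋙ G₁) G₁ (fun W => 𝟙 (G₁.obj W)) (fun V W f =>
        (Category.comp_id _).trans (Category.id_comp _).symm) Y) (eqToHom (hobj Y)) =
      FamQ.ofG (F := uHeart w S ⋙ G₁) G₂ (fun W => eqToHom (hobj W)) hmap Y := by
    apply FamQ_ext hS hF Y.property
    intro W x
    refine Eq.trans ?_ (hmap W Y (ObjectProperty.homMk x))
    exact congrArg (· ≫ eqToHom (hobj Y)) (Category.id_comp _)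
  have h3 : (𝟙 (G₁.obj X) ≫ G₁.map φ) ≫ eqToHom (hobj Y) = eqToHom (hobj X) ≫ G₂.map φ :=
    congrArg (fun δ => δ.app X φ.hom) key
  rw [Category.id_comp] at h3
  rw [← Category.assoc, ← h3, Category.assoc, eqToHom_trans, eqToHom_refl, Category.comp_id]

lemma inv_of_G {F : HeartCat w ⥤ A'} (G : HeartLoc w S ⥤ A')
    (h : uHeart w S ⋙ G = F) : Inv S F := by
  subst h
  intro X Y s hs
  have hW : DW S s := by
    obtain ⟨Z, g, h, hT⟩ := distinguished_cocone_triangle s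
    exact ⟨Z, g, h, hT, genSub.of _ ⟨_, _, s, g, h, hs, hT⟩⟩
  have : IsIso ((DW S).Q.map s) := Localization.inverts (DW S).Q (DW S) s hW
  let q := asIso ((DW S).Q.map s)
  let e : (uHeart w S).obj X ≅ (uHeart w S).obj Y :=
    { hom := (uHeart w S).map (ObjectProperty.homMk s : X ⟶ Y)
      inv := InducedCategory.homMk q.inv
      hom_inv_id := InducedCategory.hom_ext q.hom_inv_id
      inv_hom_id := InducedCategory.hom_ext q.inv_hom_id }
  exact (G.mapIso e).isIso_hom

end WLoc


/-- Theorem: `u : Hw ⥤ H` is the universal additive functor inverting `S`: an additive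
functor `F : Hw ⥤ A'` factors through `u` if and only if it makes all the elements of
`S` invertible, and in that case the factorization is unique. -/
theorem statement19 (w : WeightStructure C) (S : MorphismProperty C)
    (hS : ∀ ⦃X Y : C⦄ (f : X ⟶ Y), S f → X ∈ w.heart ∧ Y ∈ w.heart)
    {A' : Type u'} [Category.{v'} A'] [Preadditive A'] [HasFiniteBiproducts A']
    (F : HeartCat w ⥤ A') [F.Additive] :
    ((∃ G : HeartLoc w S ⥤ A', G.Additive ∧ uHeart w S ⋙ G = F) ↔
      ∀ (X Y : HeartCat w) (s : X.obj ⟶ Y.obj), S s →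
        IsIso (F.map (show X ⟶ Y from ObjectProperty.homMk s))) ∧
    ((∀ (X Y : HeartCat w) (s : X.obj ⟶ Y.obj), S s →
        IsIso (F.map (show X ⟶ Y from ObjectProperty.homMk s))) →
      ∃! G : HeartLoc w S ⥤ A', G.Additive ∧ uHeart w S ⋙ G = F) := by
  refine ⟨⟨?_, fun hF => WLoc.exists_G hS hF⟩, fun hF => ?_⟩
  · rintro ⟨G, -, hG⟩
    exact WLoc.inv_of_G G hG
  · obtain ⟨G, hG, hG'⟩ := WLoc.exists_G (F := F) hS hF
    refine ⟨G, ⟨hG, hG'⟩, ?_⟩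
    rintro G₂ ⟨hG₂, hG₂'⟩
    exact WLoc.uniq_G hS hF G₂ G hG₂' hG'

end Statement19
end
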